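/- Locality of upper gradients in X: if k ∈ L¹_loc(X) has an upper gradient g_k ∈ L¹_loc(X) (i.e., r_{F_k} = F_{g_k}) and c ∈ ℝ, then g_{k∧c} = g_k·χ_{{k<c}} and g_{k∨c} = g_k·χ_{{k>c}} μ-almost everywhere. -/

import Mathlib

open MeasureTheory Set Filter
open scoped ENNReal Classical

variable {X : Type*} [MetricSpace X] [MeasurableSpace X]

/-- Total mass of a measure, as a real number. -/
noncomputable def mass (ν : Measure X) : ℝ := (ν Set.univ).toReal

/-- The support of a measure. -/
def msupp (ν : Measure X) : Set X := {x : X | ∀ ε : ℝ, 0 < ε → 0 < ν (Metric.ball x ε)}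

/-- The set `𝓜` of measures dominated by `μ` with compact support. -/
def MM (μ : Measure X) : Set (Measure X) := {ν | ν ≤ μ ∧ IsCompact (msupp ν)}

/-- Gauge function `h` used in the definition of the mass transport metric. -/
def IsGauge (h : ℝ → ℝ) : Prop :=
  StrictMonoOn h (Set.Ici 0) ∧ ContinuousOn h (Set.Ici 0) ∧ h 0 = 0 ∧
  Tendsto (fun ε => h ε / ε) (nhdsWithin 0 (Set.Ioi 0)) (nhds 0) ∧
  (∀ a b : ℝ, 0 ≤ a → 0 ≤ b → h a + h b ≤ h (a + b)) ∧
  Tendsto h atTop atTop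

/-- `Γ_{ε,δ}(ν,η) ≠ ∅`: existence of a countable mass-transport decomposition. -/
def GammaDecomp (μ : Measure X) (ε δ : ℝ) (ν η : Measure X) : Prop :=
  ∃ νi ηi : ℕ → Measure X,
    (∀ i, νi i ∈ MM μ) ∧ (∀ i, ηi i ∈ MM μ) ∧
    ν = Measure.sum νi ∧ η = Measure.sum ηi ∧
    (∃ S : ℝ, HasSum (fun i => |mass (νi i) - mass (ηi i)|) S ∧ S ≤ δ) ∧
    (∀ i, Metric.diam (msupp (νi i) ∪ msupp (ηi i)) ≤ ε)

/-- The mass transport metric `d_𝓜`. -/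
noncomputable def dM (h : ℝ → ℝ) (μ : Measure X) (ν η : Measure X) : ℝ :=
  sInf {ε : ℝ | 0 < ε ∧ GammaDecomp μ ε (h ε) ν η}

/-- A rectifiable curve in `𝓜` subparametrized by arc-length: a `1`-Lipschitz map
`[0,b] → (𝓜, d_𝓜)`. -/
def IsCurveM (h : ℝ → ℝ) (μ : Measure X) (b : ℝ) (γ : ℝ → Measure X) : Prop :=
  0 ≤ b ∧ (∀ t ∈ Icc (0:ℝ) b, γ t ∈ MM μ) ∧
  ∀ s ∈ Icc (0:ℝ) b, ∀ t ∈ Icc (0:ℝ) b, dM h μ (γ s) (γ t) ≤ |s - t|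

/-- A rectifiable curve in `𝓧 = 𝓜 \ {0}` subparametrized by arc-length. -/
def IsCurveX (h : ℝ → ℝ) (μ : Measure X) (b : ℝ) (γ : ℝ → Measure X) : Prop :=
  IsCurveM h μ b γ ∧ ∀ t ∈ Icc (0:ℝ) b, γ t ≠ 0

/-- The mean value functional `F_f(η) = (1/‖η‖) ∫ f dη`. -/
noncomputable def FfM (f : X → ℝ) (η : Measure X) : ℝ := (∫ x, f x ∂η) / mass η

/-- `r_F^ε(η)`. -/
noncomputable def rGradE (h : ℝ → ℝ) (μ : Measure X) (F : Measure X → ℝ) (ε : ℝ)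
    (η : Measure X) : ℝ≥0∞ :=
  sSup {r : ℝ≥0∞ | ∃ (b : ℝ) (γ : ℝ → Measure X) (s : ℝ),
    IsCurveX h μ b γ ∧ γ 0 = η ∧ 0 < s ∧ s < ε ∧ s < b ∧
    r = ENNReal.ofReal (|F (γ s) - F η| / s)}

/-- The upper gradient `r_F(η) = lim_{ε→0} r_F^ε(η)`. -/
noncomputable def rGrad (h : ℝ → ℝ) (μ : Measure X) (F : Measure X → ℝ)
    (η : Measure X) : ℝ≥0∞ :=
  ⨅ (ε : ℝ) (_ : 0 < ε), rGradE h μ F ε η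

/-- Upper semicontinuous regularization along curves of `g : 𝓧 → [0,∞]`. -/
noncomputable def breveG (h : ℝ → ℝ) (μ : Measure X) (g : Measure X → ℝ≥0∞)
    (η : Measure X) : ℝ≥0∞ :=
  ⨅ (s : ℝ) (_ : 0 < s), sSup {r : ℝ≥0∞ | ∃ (b : ℝ) (γ : ℝ → Measure X) (t : ℝ),
    IsCurveX h μ b γ ∧ γ 0 = η ∧ 0 ≤ t ∧ t < s ∧ t ≤ b ∧ r = g (γ t)}

/-- `sup { Σᵢ G(ηᵢ)^p ‖ηᵢ‖ }` over finite disjointly supported families in `𝓧`. -/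
noncomputable def LpPow (μ : Measure X) (p : ℝ) (G : Measure X → ℝ≥0∞) : ℝ≥0∞ :=
  sSup {r : ℝ≥0∞ | ∃ (k : ℕ) (η : Fin k → Measure X),
    (∀ i, η i ∈ MM μ ∧ η i ≠ 0) ∧
    (∀ i j, i ≠ j → Disjoint (msupp (η i)) (msupp (η j))) ∧
    r = ∑ i, (G (η i)) ^ p * (η i) Set.univ}

/-- The `𝓛^p(𝓧)` norm of `F : 𝓧 → ℝ`. -/
noncomputable def LpNorm (μ : Measure X) (p : ℝ) (F : Measure X → ℝ) : ℝ≥0∞ :=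
  (LpPow μ p (fun η => ENNReal.ofReal |F η|)) ^ (1 / p)

/-- The `𝓛^p(𝓧)` norm for an extended exponent `p ∈ [1,∞]`. -/
noncomputable def LpNormE (μ : Measure X) (p : ℝ≥0∞) (F : Measure X → ℝ) : ℝ≥0∞ :=
  if p = ∞ then ⨆ (η : Measure X) (_ : η ∈ MM μ ∧ η ≠ 0), ENNReal.ofReal |F η|
  else LpNorm μ p.toReal F



/-!
The heart of the matter is a splitting of curves. If `γ` is a curve in `𝓧` and `θ ≤ γ(0)`, there is
a curve `γ'` starting at `θ` with `γ'(b) ≤ γ(b)`: the gauge `h` is `o(ε)` at `0`, so along a fine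
subdivision of `[0, b]` the mass transport decompositions compose to sub-Markov kernels that lose
arbitrarily little mass, and `γ'` is obtained as a limit of the images of `θ` under these kernels.

Apply this to `θ = γ(0)|_{k < c}`. Since `k ∧ c - c ≤ 0` vanishes on `{k ≥ c}`, the increase of
`∫ (k ∧ c) dγ` is at most that of `∫ k dγ'`, which the mean value inequality bounds by about
`b ∫ g dθ`. Together with the reversed curve this gives `r_{F_{k∧c}} ≤ F_{g χ_{k<c}}`, and replacing
`k, c` by `-k, -c` gives `r_{F_{k∨c}} ≤ F_{g χ_{k>c}}`. As `(k ∧ c) + (k ∨ c) = k + c`,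

`F_g = r_{F_k} ≤ r_{F_{k∧c}} + r_{F_{k∨c}} ≤ F_{g χ_{k<c}} + F_{g χ_{k>c}} ≤ F_g`,

so all these inequalities are equalities.
-/

open ProbabilityTheory
open scoped Topology

section Support

theorem mass_nonneg {α : Type*} [MeasurableSpace α] (ν : Measure α) : 0 ≤ mass ν :=
  ENNReal.toReal_nonneg

theorem mass_pos {α : Type*} [MeasurableSpace α] {ν : Measure α} [IsFiniteMeasure ν]
    (h0 : ν ≠ 0) : 0 < mass ν :=
  ENNReal.toReal_pos (Measure.measure_univ_ne_zero.2 h0) (measure_ne_top ν univ)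

theorem msupp_eq_support (ν : Measure X) : msupp ν = ν.support := by
  ext x
  exact Metric.nhds_basis_ball.mem_measureSupport.symm

theorem msupp_subset_of_isClosed {ν : Measure X} {C : Set X} (hC : IsClosed C) (h0 : ν Cᶜ = 0) :
    msupp ν ⊆ C :=
  msupp_eq_support ν ▸ Measure.support_subset_of_isClosed hC h0

theorem isClosed_msupp (ν : Measure X) : IsClosed (msupp ν) :=
  msupp_eq_support ν ▸ Measure.isClosed_support

theorem measure_msupp_compl [SecondCountableTopology X] (ν : Measure X) : ν (msupp ν)ᶜ = 0 :=
  msupp_eq_support ν ▸ Measure.measure_compl_support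

theorem zero_mem_MM (μ : Measure X) : (0 : Measure X) ∈ MM μ :=
  ⟨Measure.zero_le μ, by rw [msupp_eq_support, Measure.support_zero]; exact isCompact_empty⟩

theorem mem_MM_of_le {μ ν η : Measure X} (hη : η ∈ MM μ) (hle : ν ≤ η) : ν ∈ MM μ := by
  refine ⟨hle.trans hη.1, hη.2.of_isClosed_subset (isClosed_msupp ν) ?_⟩
  simpa only [msupp_eq_support] using Measure.support_mono hle

theorem le_restrict_of_compl_null {α : Type*} [MeasurableSpace α] {μ ν : Measure α} {K : Set α}
    (hle : ν ≤ μ) (h0 : ν Kᶜ = 0) : ν ≤ μ.restrict K := by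
  rw [← Measure.restrict_eq_self_of_ae_mem (s := K) (μ := ν) (mem_ae_iff.2 h0)]
  exact Measure.restrict_mono_measure hle K

theorem compl_null_of_le_restrict {α : Type*} [MeasurableSpace α] {μ ν : Measure α} {K : Set α}
    (hK : MeasurableSet K) (hle : ν ≤ μ.restrict K) : ν Kᶜ = 0 :=
  hle.absolutelyContinuous (mem_ae_iff.1 (ae_restrict_mem hK))

theorem mem_MM_of_le_restrict [OpensMeasurableSpace X] {μ ν : Measure X} {K : Set X}
    (hK : IsCompact K) (hle : ν ≤ μ.restrict K) : ν ∈ MM μ :=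
  ⟨hle.trans Measure.restrict_le_self, hK.of_isClosed_subset (isClosed_msupp ν) <|
    msupp_subset_of_isClosed hK.isClosed (compl_null_of_le_restrict hK.measurableSet hle)⟩

theorem isFiniteMeasure_of_mem_MM [SecondCountableTopology X] {μ ν : Measure X}
    [IsFiniteMeasureOnCompacts μ] (hν : ν ∈ MM μ) : IsFiniteMeasure ν := by
  refine ⟨?_⟩
  calc ν univ ≤ ν (msupp ν) + ν (msupp ν)ᶜ := measure_univ_le_add_compl _
    _ = ν (msupp ν) := by rw [measure_msupp_compl, add_zero]
    _ ≤ μ (msupp ν) := hν.1 _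
    _ < ∞ := hν.2.measure_lt_top

end Support

section Decomposition

variable {μ : Measure X}

theorem GammaDecomp.symm {ε δ : ℝ} {ν η : Measure X} (H : GammaDecomp μ ε δ ν η) :
    GammaDecomp μ ε δ η ν := by
  obtain ⟨νi, ηi, hν, hη, hsumν, hsumη, hmass, hdiam⟩ := H
  refine ⟨ηi, νi, hη, hν, hsumη, hsumν, ?_, fun i => ?_⟩
  · simpa only [abs_sub_comm] using hmass
  · rw [union_comm]
    exact hdiam i

theorem GammaDecomp.mono {ε ε' δ δ' : ℝ} {ν η : Measure X} (H : GammaDecomp μ ε δ ν η)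
    (hε : ε ≤ ε') (hδ : δ ≤ δ') : GammaDecomp μ ε' δ' ν η := by
  obtain ⟨νi, ηi, hν, hη, hsumν, hsumη, ⟨S, hS, hSδ⟩, hdiam⟩ := H
  exact ⟨νi, ηi, hν, hη, hsumν, hsumη, ⟨S, hS, hSδ.trans hδ⟩, fun i => (hdiam i).trans hε⟩

theorem GammaDecomp.of_countable {ι : Type*} [Countable ι] {ε S : ℝ} (hε : 0 ≤ ε)
    {νi ηi : ι → Measure X} (hν : ∀ i, νi i ∈ MM μ) (hη : ∀ i, ηi i ∈ MM μ)
    (hS : HasSum (fun i => |mass (νi i) - mass (ηi i)|) S)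
    (hdiam : ∀ i, Metric.diam (msupp (νi i) ∪ msupp (ηi i)) ≤ ε) :
    GammaDecomp μ ε S (Measure.sum νi) (Measure.sum ηi) := by
  obtain ⟨e, he⟩ := exists_injective_nat ι
  have extend_cases : ∀ n, (∃ i, Function.extend e νi 0 n = νi i ∧ Function.extend e ηi 0 n = ηi i)
      ∨ (Function.extend e νi 0 n = 0 ∧ Function.extend e ηi 0 n = 0) := fun n => by
    by_cases hn : ∃ i, e i = n
    · obtain ⟨i, rfl⟩ := hn
      exact Or.inl ⟨i, he.extend_apply _ _ _, he.extend_apply _ _ _⟩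
    · exact Or.inr ⟨Function.extend_apply' _ _ _ hn, Function.extend_apply' _ _ _ hn⟩
  refine ⟨Function.extend e νi 0, Function.extend e ηi 0, fun n => ?_, fun n => ?_,
    (Measure.sum_extend_zero he νi).symm, (Measure.sum_extend_zero he ηi).symm,
    ⟨S, ?_, le_rfl⟩, fun n => ?_⟩
  · obtain ⟨i, hi, -⟩ | ⟨h0, -⟩ := extend_cases n
    exacts [hi ▸ hν i, h0 ▸ zero_mem_MM μ]
  · obtain ⟨i, -, hi⟩ | ⟨-, h0⟩ := extend_cases n
    exacts [hi ▸ hη i, h0 ▸ zero_mem_MM μ]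
  · convert (hasSum_extend_zero he).2 hS using 2 with n
    by_cases hn : ∃ i, e i = n
    · obtain ⟨i, rfl⟩ := hn
      simp only [he.extend_apply]
    · simp only [Function.extend_apply' _ _ _ hn, Pi.zero_apply, sub_self, abs_zero]
  · obtain ⟨i, hi, hi'⟩ | ⟨h0, h0'⟩ := extend_cases n
    · rw [hi, hi']
      exact hdiam i
    · rw [h0, h0', union_self, msupp_eq_support, Measure.support_zero, Metric.diam_empty]
      exact hε

theorem GammaDecomp.of_mem_MM {ν η : Measure X} (hν : ν ∈ MM μ) (hη : η ∈ MM μ) :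
    GammaDecomp μ (Metric.diam (msupp ν ∪ msupp η)) |mass ν - mass η| ν η := by
  have H := GammaDecomp.of_countable (ι := Unit) Metric.diam_nonneg (fun _ => hν) (fun _ => hη)
    (hasSum_fintype _) (fun _ => le_rfl)
  simpa only [Measure.sum_fintype, Finset.univ_unique, Finset.sum_singleton] using H

theorem IsGauge.nonneg {h : ℝ → ℝ} (hh : IsGauge h) {x : ℝ} (hx : 0 ≤ x) : 0 ≤ h x := by
  rw [← hh.2.2.1]
  exact hh.1.monotoneOn self_mem_Ici hx hx

theorem IsGauge.eventually_mul_div_lt {h : ℝ → ℝ} (hh : IsGauge h) {r ε : ℝ} (hr : 0 < r)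
    (hε : 0 < ε) : ∀ᶠ n : ℕ in atTop, (n + 1 : ℝ) * h (r / (n + 1)) < ε := by
  have hdiv : Tendsto (fun n : ℕ => r / ((n : ℝ) + 1)) atTop (𝓝[>] 0) :=
    tendsto_nhdsWithin_iff.2 ⟨tendsto_const_nhds.div_atTop <|
      tendsto_atTop_add_const_right _ 1 tendsto_natCast_atTop_atTop,
      .of_forall fun n => by rw [mem_Ioi]; positivity⟩
  filter_upwards [(hh.2.2.2.1.comp hdiv).eventually_lt_const (div_pos hε hr)] with n hn
  rw [Function.comp_apply, div_div_eq_mul_div, div_lt_div_iff_of_pos_right hr] at hn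
  rwa [mul_comm]

theorem dM_comm (h : ℝ → ℝ) (μ ν η : Measure X) : dM h μ ν η = dM h μ η ν := by
  have : ∀ ε, GammaDecomp μ ε (h ε) ν η ↔ GammaDecomp μ ε (h ε) η ν :=
    fun ε => ⟨GammaDecomp.symm, GammaDecomp.symm⟩
  simp only [dM, this]

theorem dM_le {h : ℝ → ℝ} {ε : ℝ} {ν η : Measure X} (hε : 0 < ε)
    (H : GammaDecomp μ ε (h ε) ν η) : dM h μ ν η ≤ ε :=
  csInf_le ⟨0, fun _ hr => hr.1.le⟩ ⟨hε, H⟩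

theorem gammaDecomp_of_dM_lt {h : ℝ → ℝ} (hh : IsGauge h) {ν η : Measure X} (hν : ν ∈ MM μ)
    (hη : η ∈ MM μ) {r : ℝ} (hr : dM h μ ν η < r) : GammaDecomp μ r (h r) ν η := by
  have nonempty : {ε : ℝ | 0 < ε ∧ GammaDecomp μ ε (h ε) ν η}.Nonempty := by
    obtain ⟨ε, hmass, hε, hdiam⟩ := ((hh.2.2.2.2.2.eventually_ge_atTop |mass ν - mass η|).and
      ((eventually_gt_atTop 0).and
        (eventually_ge_atTop (Metric.diam (msupp ν ∪ msupp η))))).exists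
    exact ⟨ε, hε, (GammaDecomp.of_mem_MM hν hη).mono hdiam hmass⟩
  obtain ⟨ε, ⟨hε, H⟩, hεr⟩ := exists_lt_of_csInf_lt nonempty hr
  exact H.mono hεr.le (hh.1.monotoneOn hε.le (hε.le.trans hεr.le) hεr.le)

end Decomposition

section Kernel

variable {α β : Type*} [MeasurableSpace α] [MeasurableSpace β]

theorem comp_mono_measure {ν η : Measure α} (hle : ν ≤ η) (κ : Kernel α β) :
    κ ∘ₘ ν ≤ κ ∘ₘ η := by
  refine Measure.le_iff.2 fun s hs => ?_
  rw [Measure.bind_apply hs κ.aemeasurable, Measure.bind_apply hs κ.aemeasurable]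
  exact lintegral_mono' hle le_rfl

theorem comp_univ_add_loss {κ : Kernel α β} (hκ : ∀ x, κ x univ ≤ 1) (θ : Measure α) :
    (κ ∘ₘ θ) univ + ∫⁻ x, (1 - κ x univ) ∂θ = θ univ := by
  rw [Measure.bind_apply .univ κ.aemeasurable, ← lintegral_add_left (κ.measurable_coe .univ)]
  simp only [add_tsub_cancel_of_le (hκ _), lintegral_one]

theorem comp_univ_le {κ : Kernel α β} (hκ : ∀ x, κ x univ ≤ 1) (θ : Measure α) :
    (κ ∘ₘ θ) univ ≤ θ univ :=
  le_self_add.trans_eq (comp_univ_add_loss hκ θ)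

theorem exists_densities_of_eq_sum {ι : Type*} [Countable ι] {ν : Measure α} [SigmaFinite ν]
    {νi : ι → Measure α} (hsum : ν = Measure.sum νi) {S : ι → Set α}
    (hS : ∀ i, MeasurableSet (S i)) (hνS : ∀ i, νi i (S i)ᶜ = 0) :
    ∃ w : ι → α → ℝ≥0∞, (∀ i, Measurable (w i)) ∧ (∀ i, ν.withDensity (w i) = νi i) ∧
      (∀ i, ∀ x ∉ S i, w i x = 0) ∧ ∀ x, ∑' i, w i x ≤ 1 := by
  have hac : ∀ i, νi i ≪ ν := fun i => (hsum ▸ Measure.le_sum νi i).absolutelyContinuous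
  have hσ : ∀ i, SigmaFinite (νi i) := fun i =>
    Measure.sigmaFinite_of_le ν (hsum ▸ Measure.le_sum νi i)
  let ρ : ι → α → ℝ≥0∞ := fun i => (νi i).rnDeriv ν
  have hρ : ∀ i, Measurable (ρ i) := fun i => Measure.measurable_rnDeriv _ _
  have hρν : ∀ i, ν.withDensity (ρ i) = νi i := fun i =>
    Measure.withDensity_rnDeriv_eq _ _ (hac i)
  have sum_eq_one : ∀ᵐ x ∂ν, ∑' i, ρ i x = 1 := by
    refine (withDensity_eq_iff_of_sigmaFinite (Measurable.tsum hρ).aemeasurable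
      aemeasurable_const).1 ?_
    have tsum_eq : (fun x => ∑' i, ρ i x) = ∑' i, ρ i := funext fun x => ENNReal.tsum_apply.symm
    rw [tsum_eq, withDensity_tsum hρ, withDensity_const, one_smul]
    simp only [hρν, ← hsum]
  let G : Set α := {x | ∑' i, ρ i x ≤ 1}
  have hG : MeasurableSet G := measurableSet_le (Measurable.tsum hρ) measurable_const
  refine ⟨fun i => (G ∩ S i).indicator (ρ i), fun i => (hρ i).indicator (hG.inter (hS i)),
    fun i => ?_, fun i x hx => indicator_of_notMem (fun h => hx h.2) _, fun x => ?_⟩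
  · rw [withDensity_indicator (hG.inter (hS i)), ← restrict_withDensity (hG.inter (hS i)), hρν]
    refine Measure.restrict_eq_self_of_ae_mem ?_
    have hGi : ∀ᵐ x ∂νi i, x ∈ G := (hac i).ae_le (sum_eq_one.mono fun _ => le_of_eq)
    filter_upwards [hGi, mem_ae_iff.2 (hνS i)] with x hx hx' using ⟨hx, hx'⟩
  · by_cases hx : x ∈ G
    · exact (ENNReal.tsum_le_tsum fun i => indicator_le_self _ _ _).trans hx
    · simp only [indicator_of_notMem fun h : x ∈ G ∩ S _ => hx h.1, tsum_zero, zero_le]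

/-- The kernel sending `x` to the mixture `∑ᵢ wᵢ(x) σᵢ` of fixed measures. -/
noncomputable def mixtureKernel {ι : Type*} [Countable ι] (w : ι → α → ℝ≥0∞)
    (hw : ∀ i, Measurable (w i)) (σ : ι → Measure β) : Kernel α β where
  toFun x := Measure.sum fun i => w i x • σ i
  measurable' := by
    refine Measure.measurable_of_measurable_coe _ fun s hs => ?_
    simp only [Measure.sum_apply _ hs, Measure.smul_apply, smul_eq_mul]
    exact Measurable.tsum fun i => (hw i).mul_const _

theorem mixtureKernel_apply' {ι : Type*} [Countable ι] {w : ι → α → ℝ≥0∞}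
    (hw : ∀ i, Measurable (w i)) (σ : ι → Measure β) (x : α) {s : Set β} (hs : MeasurableSet s) :
    mixtureKernel w hw σ x s = ∑' i, w i x * σ i s :=
  Measure.sum_apply _ hs

theorem mixtureKernel_comp {ι : Type*} [Countable ι] {w : ι → α → ℝ≥0∞}
    (hw : ∀ i, Measurable (w i)) (σ : ι → Measure β) (ν : Measure α) :
    mixtureKernel w hw σ ∘ₘ ν = Measure.sum fun i => (∫⁻ x, w i x ∂ν) • σ i := by
  ext s hs
  rw [Measure.bind_apply hs (Kernel.aemeasurable _), Measure.sum_apply _ hs]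
  simp only [mixtureKernel_apply' hw σ _ hs]
  rw [lintegral_tsum fun i => ((hw i).mul_const _).aemeasurable]
  simp only [lintegral_mul_const _ (hw _), Measure.smul_apply, smul_eq_mul]

end Kernel

section Transport

/-- `κ` is a sub-Markov kernel that moves no point by more than `ε` and, applied to `ν`, loses a
mass of at most `δ`. The image measure is `κ ∘ₘ ν`. -/
structure IsTransport (ε : ℝ) (δ : ℝ≥0∞) (ν : Measure X) (κ : Kernel X X) : Prop where
  univ_le_one : ∀ x, κ x univ ≤ 1
  compl_closedBall : ∀ x, κ x (Metric.closedBall x ε)ᶜ = 0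
  loss_le : ∫⁻ x, (1 - κ x univ) ∂ν ≤ δ

namespace IsTransport

variable {ε ε₁ ε₂ : ℝ} {δ δ₁ δ₂ : ℝ≥0∞} {ν η : Measure X} {κ L : Kernel X X}

theorem anti_measure (H : IsTransport ε δ η κ) (hle : ν ≤ η) : IsTransport ε δ ν κ :=
  ⟨H.univ_le_one, H.compl_closedBall, (lintegral_mono' hle le_rfl).trans H.loss_le⟩

theorem mono (H : IsTransport ε₁ δ₁ ν κ) (hε : ε₁ ≤ ε₂) (hδ : δ₁ ≤ δ₂) : IsTransport ε₂ δ₂ ν κ :=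
  ⟨H.univ_le_one, fun x => measure_mono_null
    (compl_subset_compl.2 (Metric.closedBall_subset_closedBall hε)) (H.compl_closedBall x),
    H.loss_le.trans hδ⟩

theorem ae_dist_le (H : IsTransport ε δ ν κ) (x : X) : ∀ᵐ y ∂κ x, dist y x ≤ ε :=
  H.compl_closedBall x

protected theorem id [OpensMeasurableSpace X] (ν : Measure X) :
    IsTransport 0 0 ν (Kernel.id : Kernel X X) where
  univ_le_one x := by simp only [Kernel.id_apply, measure_univ, le_refl]
  compl_closedBall x := by simp [Kernel.id_apply, Metric.closedBall_zero]
  loss_le := by simp [Kernel.id_apply]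

theorem univ_le_comp_add (H : IsTransport ε δ ν κ) : ν univ ≤ (κ ∘ₘ ν) univ + δ :=
  (comp_univ_add_loss H.univ_le_one ν).symm.trans_le (by gcongr; exact H.loss_le)

theorem comp [OpensMeasurableSpace X] (H₁ : IsTransport ε₁ δ₁ ν κ)
    (H₂ : IsTransport ε₂ δ₂ (κ ∘ₘ ν) L) : IsTransport (ε₁ + ε₂) (δ₁ + δ₂) ν (L ∘ₖ κ) where
  univ_le_one x := by
    rw [Kernel.comp_apply]
    exact (comp_univ_le H₂.univ_le_one (κ x)).trans (H₁.univ_le_one x)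
  compl_closedBall x := by
    have hball : MeasurableSet (Metric.closedBall x (ε₁ + ε₂))ᶜ :=
      Metric.isClosed_closedBall.isOpen_compl.measurableSet
    rw [Kernel.comp_apply' _ _ _ hball, lintegral_eq_zero_iff (L.measurable_coe hball)]
    filter_upwards [H₁.ae_dist_le x] with y hy
    refine measure_mono_null (compl_subset_compl.2 ?_) (H₂.compl_closedBall y)
    exact Metric.closedBall_subset_closedBall' (by linarith)
  loss_le := by
    have loss_comp : ∀ x, 1 - (L ∘ₖ κ) x univ ≤ (1 - κ x univ) + ∫⁻ y, (1 - L y univ) ∂κ x := by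
      intro x
      rw [tsub_le_iff_right, Kernel.comp_apply, add_assoc, add_comm (lintegral _ _),
        comp_univ_add_loss H₂.univ_le_one (κ x)]
      exact le_tsub_add
    have hL : Measurable fun y => 1 - L y univ := (L.measurable_coe .univ).const_sub 1
    have hκ : Measurable fun y => 1 - κ y univ := (κ.measurable_coe .univ).const_sub 1
    calc ∫⁻ x, (1 - (L ∘ₖ κ) x univ) ∂ν
        ≤ ∫⁻ x, ((1 - κ x univ) + ∫⁻ y, (1 - L y univ) ∂κ x) ∂ν := lintegral_mono loss_comp
      _ = ∫⁻ x, (1 - κ x univ) ∂ν + ∫⁻ y, (1 - L y univ) ∂(κ ∘ₘ ν) := by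
        rw [lintegral_add_left hκ, Measure.lintegral_bind κ.aemeasurable hL.aemeasurable]
      _ ≤ δ₁ + δ₂ := add_le_add H₁.loss_le H₂.loss_le

end IsTransport

end Transport

section DecompositionKernel

theorem mul_inv_max_mul_eq_min {a b : ℝ≥0∞} (ha : a ≠ ∞) (hb : b ≠ ∞) :
    a * ((max a b)⁻¹ * b) = min a b := by
  rcases eq_or_ne (max a b) 0 with h0 | h0
  · obtain ⟨rfl, rfl⟩ := max_eq_bot.1 h0
    simp
  · rw [mul_left_comm, ← min_mul_max a b, mul_comm, mul_assoc,
      ENNReal.mul_inv_cancel h0 (max_lt ha.lt_top hb.lt_top).ne, mul_one]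

theorem univ_le_ofReal_abs_mass_sub_add_min {α : Type*} [MeasurableSpace α] (ν η : Measure α)
    [IsFiniteMeasure ν] [IsFiniteMeasure η] :
    ν univ ≤ ENNReal.ofReal |mass ν - mass η| + min (ν univ) (η univ) := by
  rcases le_total (ν univ) (η univ) with hle | hle
  · rw [min_eq_left hle]
    exact le_add_self
  · rw [min_eq_right hle, ← ENNReal.ofReal_toReal (measure_ne_top ν univ),
      ← ENNReal.ofReal_toReal (measure_ne_top η univ), ← mass, ← mass,
      ← ENNReal.ofReal_add (abs_nonneg _) (mass_nonneg η)]
    exact ENNReal.ofReal_le_ofReal (by linarith [le_abs_self (mass ν - mass η)])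

theorem exists_kernel_of_sum {α : Type*} [MeasurableSpace α] {ι : Type*} [Countable ι]
    {νi ηi : ι → Measure α} [∀ i, IsFiniteMeasure (νi i)] [∀ i, IsFiniteMeasure (ηi i)]
    [SigmaFinite (Measure.sum νi)] {S : ι → Set α} (hS : ∀ i, MeasurableSet (S i))
    (hνS : ∀ i, νi i (S i)ᶜ = 0) :
    ∃ κ : Kernel α α, (∀ x, κ x univ ≤ 1) ∧ κ ∘ₘ Measure.sum νi ≤ Measure.sum ηi ∧
      (κ ∘ₘ Measure.sum νi) univ = ∑' i, min (νi i univ) (ηi i univ) ∧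
      ∀ x T, MeasurableSet T → (∀ i, x ∈ S i → ηi i T = 0) → κ x T = 0 := by
  obtain ⟨w, hw, hwν, hwS, hw1⟩ := exists_densities_of_eq_sum rfl hS hνS
  let c : ι → ℝ≥0∞ := fun i => (max (νi i univ) (ηi i univ))⁻¹
  have integral_w : ∀ i, ∫⁻ x, w i x ∂(Measure.sum νi) = νi i univ := fun i => by
    rw [← setLIntegral_univ, ← withDensity_apply _ .univ, hwν]
  have c_mul_le : ∀ i a, a ≤ max (νi i univ) (ηi i univ) → c i * a ≤ 1 := fun i a ha =>
    (mul_le_mul_right ha (c i)).trans (ENNReal.inv_mul_le_one _)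
  have comp_eq : mixtureKernel w hw (fun i => c i • ηi i) ∘ₘ Measure.sum νi =
      Measure.sum fun i => νi i univ • c i • ηi i := by
    simp only [mixtureKernel_comp, integral_w]
  refine ⟨mixtureKernel w hw fun i => c i • ηi i, fun x => ?_, ?_, ?_, fun x T hT hηT => ?_⟩
  · rw [mixtureKernel_apply' _ _ _ .univ]
    refine (ENNReal.tsum_le_tsum fun i => ?_).trans (hw1 x)
    exact mul_le_of_le_one_right' (c_mul_le i _ (le_max_right _ _))
  · rw [comp_eq]
    refine Measure.le_iff.2 fun s hs => ?_
    simp only [Measure.sum_apply _ hs, Measure.smul_apply, smul_eq_mul, ← mul_assoc]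
    refine ENNReal.tsum_le_tsum fun i => mul_le_of_le_one_left' ?_
    rw [mul_comm]
    exact c_mul_le i _ (le_max_left _ _)
  · simp only [comp_eq, Measure.sum_apply _ MeasurableSet.univ, Measure.smul_apply, smul_eq_mul]
    exact tsum_congr fun i => mul_inv_max_mul_eq_min (measure_ne_top _ _) (measure_ne_top _ _)
  · rw [mixtureKernel_apply' _ _ _ hT, ENNReal.tsum_eq_zero]
    intro i
    by_cases hx : x ∈ S i
    · simp only [Measure.smul_apply, hηT i hx, smul_zero, mul_zero]
    · simp only [hwS i x hx, zero_mul]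

theorem GammaDecomp.exists_isTransport [OpensMeasurableSpace X] [SecondCountableTopology X]
    {μ : Measure X} [IsFiniteMeasureOnCompacts μ] {ε δ : ℝ} {ν η : Measure X} [IsFiniteMeasure ν]
    (H : GammaDecomp μ ε δ ν η) :
    ∃ κ : Kernel X X, IsTransport ε (ENNReal.ofReal δ) ν κ ∧ κ ∘ₘ ν ≤ η := by
  obtain ⟨νi, ηi, hνi, hηi, rfl, rfl, ⟨S, hS, hSδ⟩, hdiam⟩ := H
  have hfν : ∀ i, IsFiniteMeasure (νi i) := fun i => isFiniteMeasure_of_mem_MM (hνi i)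
  have hfη : ∀ i, IsFiniteMeasure (ηi i) := fun i => isFiniteMeasure_of_mem_MM (hηi i)
  obtain ⟨κ, hκ1, hκle, hκuniv, hκ0⟩ := exists_kernel_of_sum (νi := νi) (ηi := ηi)
    (fun i => (isClosed_msupp (νi i)).measurableSet) (fun i => measure_msupp_compl (νi i))
  have sum_mass_le : ∑' i, ENNReal.ofReal |mass (νi i) - mass (ηi i)| ≤ ENNReal.ofReal δ := by
    rw [← ENNReal.ofReal_tsum_of_nonneg (fun i => abs_nonneg _) hS.summable, hS.tsum_eq]
    exact ENNReal.ofReal_le_ofReal hSδ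
  refine ⟨κ, ⟨hκ1, fun x => hκ0 x _ Metric.isClosed_closedBall.isOpen_compl.measurableSet ?_, ?_⟩,
    hκle⟩
  · refine fun i hx => measure_mono_null (compl_subset_compl.2 fun y hy => ?_)
      (measure_msupp_compl (ηi i))
    exact (Metric.dist_le_diam_of_mem ((hνi i).2.union (hηi i).2).isBounded
      (Or.inr hy) (Or.inl hx)).trans (hdiam i)
  · have hfin : (κ ∘ₘ Measure.sum νi) univ ≠ ∞ :=
      ((comp_univ_le hκ1 _).trans_lt (measure_lt_top _ _)).ne
    refine (ENNReal.add_le_add_iff_left hfin).1 ?_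
    rw [comp_univ_add_loss hκ1, Measure.sum_apply _ .univ, hκuniv, add_comm]
    calc ∑' i, νi i univ
        ≤ ∑' i, (ENNReal.ofReal |mass (νi i) - mass (ηi i)| + min (νi i univ) (ηi i univ)) :=
          ENNReal.tsum_le_tsum fun i => univ_le_ofReal_abs_mass_sub_add_min (νi i) (ηi i)
      _ ≤ ENNReal.ofReal δ + ∑' i, min (νi i univ) (ηi i univ) := by
          rw [ENNReal.tsum_add]
          gcongr

end DecompositionKernel

section Floor

theorem natFloor_sub_natFloor_le {x y : ℝ} (hx : 0 ≤ x) (hxy : x ≤ y) :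
    ((⌊y⌋₊ - ⌊x⌋₊ : ℕ) : ℝ) ≤ y - x + 1 := by
  rw [Nat.cast_sub (Nat.floor_le_floor hxy)]
  linarith [Nat.floor_le (hx.trans hxy), Nat.lt_floor_add_one x]

theorem natFloor_sub_natFloor_mul_div_le {s t b N ε : ℝ} (hb : 0 < b) (hε : 0 ≤ ε) (hs : 0 ≤ s)
    (hst : s ≤ t) (ht : t ≤ b) (hN : 0 < N) (hNε : (b + ε / 2) / N ≤ ε / 2) :
    ((⌊t / b * N⌋₊ - ⌊s / b * N⌋₊ : ℕ) : ℝ) * ((b + ε / 2) / N) ≤ t - s + ε := by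
  have hfloor := natFloor_sub_natFloor_le (x := s / b * N) (y := t / b * N) (by positivity)
    (by gcongr)
  calc ((⌊t / b * N⌋₊ - ⌊s / b * N⌋₊ : ℕ) : ℝ) * ((b + ε / 2) / N)
      ≤ (t / b * N - s / b * N + 1) * ((b + ε / 2) / N) := by gcongr
    _ = (t - s) + (t - s) / b * (ε / 2) + (b + ε / 2) / N := by field_simp
    _ ≤ (t - s) + 1 * (ε / 2) + ε / 2 := by
      gcongr
      exact (div_le_one hb).2 (by linarith)
    _ = t - s + ε := by ring

end Floor

section Curve

variable {h : ℝ → ℝ} {μ : Measure X} {b : ℝ} {γ : ℝ → Measure X}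

theorem IsCurveM.zero_mem (hγ : IsCurveM h μ b γ) : (0 : ℝ) ∈ Icc 0 b := left_mem_Icc.2 hγ.1

theorem IsCurveM.length_mem (hγ : IsCurveM h μ b γ) : b ∈ Icc 0 b := right_mem_Icc.2 hγ.1

theorem IsCurveM.reverse (hγ : IsCurveM h μ b γ) : IsCurveM h μ b fun t => γ (b - t) := by
  have hmem : ∀ t ∈ Icc (0 : ℝ) b, b - t ∈ Icc (0 : ℝ) b := fun t ht =>
    ⟨by linarith [ht.2], by linarith [ht.1]⟩
  refine ⟨hγ.1, fun t ht => hγ.2.1 _ (hmem t ht), fun s hs t ht => ?_⟩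
  refine (hγ.2.2 _ (hmem s hs) _ (hmem t ht)).trans_eq ?_
  rw [sub_sub_sub_cancel_left, abs_sub_comm]

theorem IsCurveM.subcurve (hγ : IsCurveM h μ b γ) {s t : ℝ} (hs : 0 ≤ s) (hst : s ≤ t)
    (ht : t ≤ b) : IsCurveM h μ (t - s) fun u => γ (s + u) := by
  have hmem : ∀ u ∈ Icc (0 : ℝ) (t - s), s + u ∈ Icc (0 : ℝ) b := fun u hu =>
    ⟨by linarith [hu.1], by linarith [hu.2]⟩
  refine ⟨sub_nonneg.2 hst, fun u hu => hγ.2.1 _ (hmem u hu), fun u hu v hv => ?_⟩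
  refine (hγ.2.2 _ (hmem u hu) _ (hmem v hv)).trans_eq ?_
  rw [add_sub_add_left_eq_sub]

theorem IsCurveX.subcurve (hγ : IsCurveX h μ b γ) {s t : ℝ} (hs : 0 ≤ s) (hst : s ≤ t)
    (ht : t ≤ b) : IsCurveX h μ (t - s) fun u => γ (s + u) :=
  ⟨hγ.1.subcurve hs hst ht, fun u hu => hγ.2 _ ⟨by linarith [hu.1], by linarith [hu.2]⟩⟩

/-- Up to an arbitrarily small loss, all of `ν` can be carried into `η` by moving no point by more
than `r`. The rest of `η` is unconstrained, so `η` may be heavier than `ν`. -/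
def TransportsWithin (r : ℝ) (ν η : Measure X) : Prop :=
  ∀ δ : ℝ≥0∞, 0 < δ → ∃ κ : Kernel X X, IsTransport r δ ν κ ∧ κ ∘ₘ ν ≤ η

theorem TransportsWithin.univ_le {r : ℝ} {ν η : Measure X} (H : TransportsWithin r ν η) :
    ν univ ≤ η univ := by
  refine ENNReal.le_of_forall_pos_le_add fun δ hδ _ => ?_
  obtain ⟨κ, hκ, hle⟩ := H δ (ENNReal.coe_pos.2 hδ)
  exact hκ.univ_le_comp_add.trans (add_le_add_left (hle univ) _)

variable [OpensMeasurableSpace X]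

theorem exists_subchain {ν : ℕ → Measure X} {r : ℝ} {δ : ℝ≥0∞}
    (hν : ∀ j, ∃ κ : Kernel X X, IsTransport r δ (ν j) κ ∧ κ ∘ₘ ν j ≤ ν (j + 1))
    {θ : Measure X} (hθ : θ ≤ ν 0) :
    ∃ T : ℕ → Measure X, T 0 = θ ∧ (∀ j, T j ≤ ν j) ∧
      ∀ i m : ℕ, ∃ L : Kernel X X, IsTransport (m * r) (m * δ) (T i) L ∧ L ∘ₘ T i = T (i + m) := by
  choose κ hκ hκν using hν
  let T : ℕ → Measure X := fun j => Nat.rec θ (fun j τ => κ j ∘ₘ τ) j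
  have hT : ∀ j, T j ≤ ν j := fun j => by
    induction j with
    | zero => exact hθ
    | succ j ih => exact (comp_mono_measure ih (κ j)).trans (hκν j)
  refine ⟨T, rfl, hT, fun i m => ?_⟩
  induction m with
  | zero => exact ⟨Kernel.id, by simpa using IsTransport.id (T i), Measure.id_comp⟩
  | succ m ih =>
    obtain ⟨L, hL, hLT⟩ := ih
    refine ⟨κ (i + m) ∘ₖ L, ?_, by rw [← Measure.comp_assoc, hLT]; rfl⟩
    push_cast
    rw [add_one_mul, add_one_mul]
    exact hL.comp (hLT ▸ (hκ (i + m)).anti_measure (hT (i + m)))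

variable [SecondCountableTopology X] [IsFiniteMeasureOnCompacts μ]

theorem IsCurveM.exists_isTransport (hh : IsGauge h) (hγ : IsCurveM h μ b γ) {s t r : ℝ}
    (hs : s ∈ Icc 0 b) (ht : t ∈ Icc 0 b) (hr : |s - t| < r) :
    ∃ κ : Kernel X X, IsTransport r (ENNReal.ofReal (h r)) (γ s) κ ∧ κ ∘ₘ γ s ≤ γ t := by
  have := isFiniteMeasure_of_mem_MM (hγ.2.1 s hs)
  exact (gammaDecomp_of_dM_lt hh (hγ.2.1 s hs) (hγ.2.1 t ht)
    ((hγ.2.2 s hs t ht).trans_lt hr)).exists_isTransport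

theorem IsCurveM.exists_subchain (hh : IsGauge h) (hγ : IsCurveM h μ b γ) {r : ℝ} (hr : b < r)
    (n : ℕ) {θ : Measure X} (hθ : θ ≤ γ 0) :
    ∃ T : ℕ → Measure X, T 0 = θ ∧ T (n + 1) ≤ γ b ∧ (∀ j, ∃ u ∈ Icc 0 b, T j ≤ γ u) ∧
      ∀ i m : ℕ, ∃ L : Kernel X X, IsTransport (m * (r / (n + 1)))
        (m * ENNReal.ofReal (h (r / (n + 1)))) (T i) L ∧ L ∘ₘ T i = T (i + m) := by
  let p : ℕ → ℝ := fun j => min (j * (b / (n + 1))) b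
  have hp : ∀ j, p j ∈ Icc 0 b := fun j =>
    ⟨le_min (mul_nonneg j.cast_nonneg (div_nonneg hγ.1 (by positivity))) hγ.1, min_le_right _ _⟩
  have dist_p_lt : ∀ j, |p j - p (j + 1)| < r / (n + 1) := fun j => by
    refine (abs_min_sub_min_le_max _ _ _ _).trans_lt ?_
    rw [sub_self, abs_zero, max_eq_left (abs_nonneg _), abs_sub_comm, Nat.cast_succ,
      add_one_mul, add_sub_cancel_left, abs_of_nonneg (div_nonneg hγ.1 (by positivity))]
    gcongr
  obtain ⟨T, hT0, hT, hL⟩ := _root_.exists_subchain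
    (fun j => hγ.exists_isTransport hh (hp j) (hp (j + 1)) (dist_p_lt j))
    (θ := θ) (by simpa [p, hγ.1] using hθ)
  have p_last : p (n + 1) = b := by
    simp only [p, Nat.cast_succ, mul_div_cancel₀ b (Nat.cast_add_one_ne_zero n), min_self]
  exact ⟨T, hT0, p_last ▸ hT (n + 1), fun j => ⟨p j, hp j, hT j⟩, hL⟩

theorem IsCurveM.exists_approx_subcurve (hh : IsGauge h) (hγ : IsCurveM h μ b γ) (hb : 0 < b)
    {θ : Measure X} (hθ : θ ≤ γ 0) {ε : ℝ} (hε : 0 < ε) :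
    ∃ σ : ℝ → Measure X, σ 0 = θ ∧ σ b ≤ γ b ∧ (∀ t, ∃ u ∈ Icc 0 b, σ t ≤ γ u) ∧
      ∀ s ∈ Icc 0 b, ∀ t ∈ Icc 0 b, s ≤ t → ∃ L : Kernel X X,
        IsTransport (t - s + ε) (ENNReal.ofReal ε) (σ s) L ∧ L ∘ₘ σ s = σ t := by
  have hr : 0 < b + ε / 2 := by positivity
  have radius_tendsto : Tendsto (fun n : ℕ => (b + ε / 2) / (n + 1)) atTop (𝓝 0) :=
    tendsto_const_nhds.div_atTop <|
      tendsto_atTop_add_const_right _ 1 tendsto_natCast_atTop_atTop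
  obtain ⟨n, hloss, hn⟩ := ((hh.eventually_mul_div_lt hr hε).and
    (radius_tendsto.eventually_lt_const (half_pos hε))).exists
  obtain ⟨T, hT0, hTb, hTγ, hL⟩ := hγ.exists_subchain hh (lt_add_of_pos_right b (half_pos hε)) n hθ
  refine ⟨fun t => T ⌊t / b * (n + 1)⌋₊, by simpa using hT0, ?_, fun t => hTγ _,
    fun s hs t ht hst => ?_⟩
  · have : ⌊b / b * (n + 1)⌋₊ = n + 1 := by
      rw [div_self hb.ne', one_mul, ← Nat.cast_succ, Nat.floor_natCast]
    simpa only [this] using hTb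
  obtain ⟨L, hLtr, hLT⟩ := hL ⌊s / b * (n + 1)⌋₊ (⌊t / b * (n + 1)⌋₊ - ⌊s / b * (n + 1)⌋₊)
  have hidx : s / b * (n + 1) ≤ t / b * (n + 1) := by gcongr
  refine ⟨L, hLtr.mono ?_ ?_, hLT.trans ?_⟩
  · exact natFloor_sub_natFloor_mul_div_le hb hε.le hs.1 hst ht.2 (by positivity) hn.le
  · rw [← ENNReal.ofReal_natCast, ← ENNReal.ofReal_mul (by positivity)]
    refine ENNReal.ofReal_le_ofReal (hloss.le.trans' ?_)
    gcongr
    · exact hh.nonneg (by positivity)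
    have : ⌊t / b * (n + 1)⌋₊ ≤ n + 1 := Nat.floor_le_of_le <| by
      push_cast
      exact mul_le_of_le_one_left (by positivity) ((div_le_one hb).2 ht.2)
    exact_mod_cast (Nat.sub_le _ _).trans this
  · rw [Nat.add_sub_cancel' (Nat.floor_le_floor hidx)]

theorem IsCurveM.transportsWithin_length (hh : IsGauge h) (hγ : IsCurveM h μ b γ) {r : ℝ}
    (hr : b < r) : TransportsWithin r (γ 0) (γ b) := by
  intro δ hδ
  rcases hγ.1.eq_or_lt with rfl | hb
  · exact ⟨Kernel.id, (IsTransport.id (γ 0)).mono hr.le hδ.le, Measure.id_comp.le⟩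
  obtain ⟨a, ha, haδ⟩ := ENNReal.lt_iff_exists_nnreal_btwn.1 hδ
  obtain ⟨σ, hσ0, hσb, -, hσ⟩ := hγ.exists_approx_subcurve hh hb le_rfl
    (lt_min (sub_pos.2 hr) (NNReal.coe_pos.2 (ENNReal.coe_pos.1 ha)))
  obtain ⟨L, hL, hLσ⟩ := hσ 0 hγ.zero_mem b hγ.length_mem hγ.1
  rw [hσ0] at hL hLσ
  refine ⟨L, hL.mono ?_ ?_, hLσ.trans_le hσb⟩
  · linarith [min_le_left (r - b) a]
  · exact (ENNReal.ofReal_le_ofReal (min_le_right _ _)).trans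
      ((ENNReal.ofReal_coe_nnreal).trans_le haδ.le)

theorem IsCurveM.transportsWithin (hh : IsGauge h) (hγ : IsCurveM h μ b γ) {s t r : ℝ}
    (hs : 0 ≤ s) (hst : s ≤ t) (ht : t ≤ b) (hr : t - s < r) :
    TransportsWithin r (γ s) (γ t) := by
  simpa using (hγ.subcurve hs hst ht).transportsWithin_length hh hr

theorem IsCurveM.univ_eq (hh : IsGauge h) (hγ : IsCurveM h μ b γ) : γ b univ = γ 0 univ := by
  refine le_antisymm ?_ (hγ.transportsWithin_length hh (lt_add_one b)).univ_le
  simpa using (hγ.reverse.transportsWithin_length hh (lt_add_one b)).univ_le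

end Curve

section SetwiseLimit

theorem tendsto_tsum_ennreal_of_le {ι β : Type*} {l : Filter ι} {f : ι → β → ℝ≥0∞}
    {a bound : β → ℝ≥0∞} (bound_ne_top : ∑' i, bound i ≠ ∞) (hf : ∀ n i, f n i ≤ bound i)
    (ha_le : ∀ i, a i ≤ bound i) (ha : ∀ i, Tendsto (fun n => f n i) l (𝓝 (a i))) :
    Tendsto (fun n => ∑' i, f n i) l (𝓝 (∑' i, a i)) := by
  have ne_top_of_le : ∀ {u : β → ℝ≥0∞}, (∀ i, u i ≤ bound i) → ∑' i, u i ≠ ∞ := fun hu =>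
    ne_top_of_le_ne_top bound_ne_top (ENNReal.tsum_le_tsum hu)
  have hf_ne_top : ∀ n i, f n i ≠ ∞ := fun n =>
    ENNReal.ne_top_of_tsum_ne_top (ne_top_of_le (hf n))
  have ha_ne_top : ∀ i, a i ≠ ∞ := ENNReal.ne_top_of_tsum_ne_top (ne_top_of_le ha_le)
  refine (ENNReal.tendsto_toReal_iff (fun n => ne_top_of_le (hf n)) (ne_top_of_le ha_le)).1 ?_
  simp only [ENNReal.tsum_toReal_eq (hf_ne_top _), ENNReal.tsum_toReal_eq ha_ne_top]
  refine tendsto_tsum_of_dominated_convergence (ENNReal.summable_toReal bound_ne_top)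
    (fun i => (ENNReal.tendsto_toReal (ha_ne_top i)).comp (ha i)) (.of_forall fun n i => ?_)
  rw [Real.norm_of_nonneg ENNReal.toReal_nonneg]
  exact ENNReal.toReal_mono (ENNReal.ne_top_of_tsum_ne_top bound_ne_top i) (hf n i)

theorem exists_measure_tendsto_of_le {α ι : Type*} [MeasurableSpace α] {m : Measure α}
    [IsFiniteMeasure m] {ν : ι → Measure α} (U : Ultrafilter ι) (hle : ∀ n, ν n ≤ m) :
    ∃ ν' ≤ m, ∀ A, MeasurableSet A → Tendsto (fun n => ν n A) U (𝓝 (ν' A)) := by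
  let L : Set α → ℝ≥0∞ := fun A => (U.map fun n => ν n A).lim
  have hL : ∀ A, Tendsto (fun n => ν n A) U (𝓝 (L A)) := fun A => (U.map _).le_nhds_lim
  have L_le : ∀ A, L A ≤ m A := fun A => le_of_tendsto' (hL A) fun n => hle n A
  have L_empty : L ∅ = 0 := tendsto_nhds_unique (hL ∅) (by simp)
  have L_iUnion : ∀ ⦃A : ℕ → Set α⦄, (∀ i, MeasurableSet (A i)) →
      Pairwise (Function.onFun Disjoint A) → L (⋃ i, A i) = ∑' i, L (A i) := fun A hA hd => by
    refine tendsto_nhds_unique (hL _) ?_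
    simp only [measure_iUnion hd hA]
    refine tendsto_tsum_ennreal_of_le (bound := fun i => m (A i)) ?_ (fun n i => hle n _)
      (fun i => L_le _) fun i => hL _
    rw [← measure_iUnion hd hA]
    exact measure_ne_top _ _
  refine ⟨Measure.ofMeasurable (fun A _ => L A) L_empty L_iUnion, Measure.le_iff.2 fun A hA => ?_,
    fun A hA => ?_⟩
  · rw [Measure.ofMeasurable_apply A hA]
    exact L_le A
  · rw [Measure.ofMeasurable_apply A hA]
    exact hL A

end SetwiseLimit

section TransportLimit

theorem IsTransport.comp_restrict_thickening_compl [OpensMeasurableSpace X] {r ε : ℝ} {δ : ℝ≥0∞}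
    {ν : Measure X} {κ : Kernel X X} (H : IsTransport ε δ ν κ) (hε : ε < r) {A : Set X}
    (hA : MeasurableSet A) : (κ ∘ₘ ν.restrict A) (Metric.thickening r A)ᶜ = 0 := by
  have hT : MeasurableSet (Metric.thickening r A)ᶜ :=
    Metric.isOpen_thickening.measurableSet.compl
  rw [Measure.bind_apply hT κ.aemeasurable]
  refine (setLIntegral_congr_fun hA fun x hx => ?_).trans lintegral_zero
  refine measure_mono_null (compl_subset_compl.2 fun y hy => ?_) (H.compl_closedBall x)
  exact Metric.mem_thickening_iff.2 ⟨x, hx, (Metric.mem_closedBall.1 hy).trans_lt hε⟩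

variable [OpensMeasurableSpace X] {ι : Type*} {U : Ultrafilter ι} {m : Measure X}
  [IsFiniteMeasure m] {σ : ι → Measure X} {L : ι → Kernel X X} {R : ι → ℝ} {δ : ι → ℝ≥0∞} {r : ℝ}
  {ν η : Measure X}

theorem exists_tendsto_comp_restrict (hL : ∀ n, IsTransport (R n) (δ n) (σ n) (L n))
    (hR : ∀ᶠ n in U, R n < r) (hδ : Tendsto δ U (𝓝 0)) (hLσ : ∀ n, L n ∘ₘ σ n ≤ m)
    (hν : ∀ B, MeasurableSet B → Tendsto (fun n => σ n B) U (𝓝 (ν B)))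
    {A : Set X} (hA : MeasurableSet A) :
    ∃ ρ : Measure X, ρ univ = ν A ∧ ρ (Metric.thickening r A)ᶜ = 0 ∧
      ∀ B, MeasurableSet B → Tendsto (fun n => (L n ∘ₘ (σ n).restrict A) B) U (𝓝 (ρ B)) := by
  have restrict_transport : ∀ n, IsTransport (R n) (δ n) ((σ n).restrict A) (L n) := fun n =>
    (hL n).anti_measure Measure.restrict_le_self
  obtain ⟨ρ, -, hρ⟩ := exists_measure_tendsto_of_le U fun n =>
    (comp_mono_measure (Measure.restrict_le_self (s := A)) (L n)).trans (hLσ n)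
  refine ⟨ρ, le_antisymm ?_ ?_, ?_, hρ⟩
  · refine le_of_tendsto_of_tendsto' (hρ univ .univ) (hν A hA) fun n => ?_
    simpa using comp_univ_le (hL n).univ_le_one ((σ n).restrict A)
  · have upper := (hρ univ .univ).add hδ
    rw [add_zero] at upper
    refine le_of_tendsto_of_tendsto' (hν A hA) upper fun n => ?_
    simpa using (restrict_transport n).univ_le_comp_add
  · refine tendsto_nhds_unique (hρ _ Metric.isOpen_thickening.measurableSet.compl)
      (tendsto_const_nhds.congr' ?_)
    filter_upwards [hR] with n hn
    exact ((hL n).comp_restrict_thickening_compl hn hA).symm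

theorem exists_sum_eq_of_partition (hL : ∀ n, IsTransport (R n) (δ n) (σ n) (L n))
    (hR : ∀ᶠ n in U, R n < r) (hδ : Tendsto δ U (𝓝 0)) (hσ : ∀ n, σ n ≤ m)
    (hLσ : ∀ n, L n ∘ₘ σ n ≤ m)
    (hν : ∀ B, MeasurableSet B → Tendsto (fun n => σ n B) U (𝓝 (ν B)))
    (hη : ∀ B, MeasurableSet B → Tendsto (fun n => (L n ∘ₘ σ n) B) U (𝓝 (η B)))
    {A : ℕ → Set X} (hA : ∀ i, MeasurableSet (A i)) (hd : Pairwise (Function.onFun Disjoint A))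
    (hcover : ⋃ i, A i = univ) :
    ∃ ρ : ℕ → Measure X, Measure.sum ρ = η ∧ (∀ i, ρ i univ = ν (A i)) ∧
      ∀ i, ρ i (Metric.thickening r (A i))ᶜ = 0 := by
  choose ρ hρ_univ hρ_thickening hρ using fun i =>
    exists_tendsto_comp_restrict hL hR hδ hLσ hν (hA i)
  refine ⟨ρ, Measure.ext fun B hB => ?_, hρ_univ, hρ_thickening⟩
  have sum_restrict : ∀ n, (L n ∘ₘ σ n) B = ∑' i, (L n ∘ₘ (σ n).restrict (A i)) B := fun n => by
    simp only [Measure.bind_apply hB (L n).aemeasurable]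
    rw [← lintegral_iUnion hA hd, hcover, Measure.restrict_univ]
  have mass_le : ∀ n i, (L n ∘ₘ (σ n).restrict (A i)) B ≤ m (A i) := fun n i =>
    calc (L n ∘ₘ (σ n).restrict (A i)) B ≤ (L n ∘ₘ (σ n).restrict (A i)) univ :=
          measure_mono (subset_univ B)
      _ ≤ (σ n).restrict (A i) univ := comp_univ_le (hL n).univ_le_one _
      _ ≤ m (A i) := by simpa using hσ n (A i)
  have sum_mass_ne_top : ∑' i, m (A i) ≠ ∞ := by
    rw [← measure_iUnion hd hA]
    exact measure_ne_top _ _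
  have hlim := tendsto_tsum_ennreal_of_le sum_mass_ne_top mass_le
    (fun i => le_of_tendsto' (hρ i B hB) fun n => mass_le n i) fun i => hρ i B hB
  simp only [← sum_restrict] at hlim
  rw [Measure.sum_apply _ hB]
  exact tendsto_nhds_unique hlim (hη B hB)

end TransportLimit

section PartitionDecomposition

theorem sum_smul_cond_eq_restrict {α ι : Type*} [MeasurableSpace α] {ν : Measure α}
    [IsFiniteMeasure ν] {A : Set α} {p : ι → ℝ≥0∞} (hp : ∑' j, p j = ν A) :
    Measure.sum (fun j => p j • ν[|A]) = ν.restrict A := by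
  ext B hB
  simp only [Measure.sum_apply _ hB, Measure.smul_apply, smul_eq_mul, ENNReal.tsum_mul_right, hp,
    cond_apply' hB, Measure.restrict_apply hB]
  by_cases hA : ν A = 0
  · rw [measure_mono_null inter_subset_right hA, hA, zero_mul]
  · rw [← mul_assoc, ENNReal.mul_inv_cancel hA (measure_ne_top _ _), one_mul, inter_comm]

theorem msupp_zero : msupp (0 : Measure X) = ∅ :=
  eq_empty_of_forall_notMem fun _ hx => lt_irrefl _ (hx 1 one_pos)

theorem diam_msupp_union_le {ν η : Measure X} {A B : Set X} (hA : Bornology.IsBounded A)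
    (hB : Bornology.IsBounded B) (hν : ν (closure A)ᶜ = 0) (hη : η (closure B)ᶜ = 0) {x y : X}
    (hx : x ∈ A) (hy : y ∈ B) :
    Metric.diam (msupp ν ∪ msupp η) ≤ Metric.diam A + dist x y + Metric.diam B := by
  refine (Metric.diam_mono (t := closure (A ∪ B)) ?_ (hA.union hB).closure).trans ?_
  · rw [closure_union]
    exact union_subset_union (msupp_subset_of_isClosed isClosed_closure hν)
      (msupp_subset_of_isClosed isClosed_closure hη)
  · rw [Metric.diam_closure]
    exact Metric.diam_union hx hy

theorem restrict_closure_compl [OpensMeasurableSpace X] (ν : Measure X) (A : Set X) :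
    ν.restrict A (closure A)ᶜ = 0 := by
  rw [Measure.restrict_apply isClosed_closure.measurableSet.compl]
  exact measure_mono_null (fun x hx => hx.1 (subset_closure hx.2)) measure_empty

theorem diam_msupp_cond_union_restrict_le [OpensMeasurableSpace X] {ν ρ : Measure X} {A B : Set X}
    (hA : Bornology.IsBounded A) (hB : Bornology.IsBounded B) {r : ℝ} (hr : 0 ≤ r)
    (hρ : ρ (Metric.thickening r A)ᶜ = 0) :
    Metric.diam (msupp (ρ B • ν[|A]) ∪ msupp (ρ.restrict B)) ≤
      Metric.diam A + r + Metric.diam B := by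
  have hdiam : ∀ C : Set X, 0 ≤ Metric.diam C := fun _ => Metric.diam_nonneg
  by_cases h0 : ρ B = 0
  · rw [h0, zero_smul, Measure.restrict_eq_zero.2 h0, msupp_zero, union_self, Metric.diam_empty]
    linarith [hdiam A, hdiam B]
  obtain ⟨y, hyB, hy⟩ : (B ∩ Metric.thickening r A).Nonempty := by
    by_contra hempty
    exact h0 (measure_mono_null (fun y hyB hy => hempty ⟨y, hyB, hy⟩) hρ)
  obtain ⟨x, hx, hyx⟩ := Metric.mem_thickening_iff.1 hy
  refine (diam_msupp_union_le hA hB ?_ (restrict_closure_compl _ _) hx hyB).trans ?_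
  · rw [ProbabilityTheory.cond, Measure.smul_apply, Measure.smul_apply, restrict_closure_compl,
      smul_zero, smul_zero]
  · rw [dist_comm]
    gcongr

variable [OpensMeasurableSpace X] {μ ν η : Measure X}

theorem GammaDecomp.of_partition [IsFiniteMeasure ν] (hν : ν ∈ MM μ) (hη : η ∈ MM μ)
    {A : ℕ → Set X} (hA : ∀ i, MeasurableSet (A i)) (hd : Pairwise (Function.onFun Disjoint A))
    (hcover : ⋃ i, A i = univ) {τ : ℝ} (hbdd : ∀ i, Bornology.IsBounded (A i))
    (hdiam : ∀ i, Metric.diam (A i) ≤ τ) {ρ : ℕ → Measure X} (hρη : Measure.sum ρ = η)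
    (hρν : ∀ i, ρ i univ = ν (A i)) {r : ℝ} (hr : 0 ≤ r)
    (hρ : ∀ i, ρ i (Metric.thickening r (A i))ᶜ = 0) :
    GammaDecomp μ (τ + r + τ) 0 ν η := by
  let νp : ℕ × ℕ → Measure X := fun p => ρ p.1 (A p.2) • ν[|A p.1]
  let ηp : ℕ × ℕ → Measure X := fun p => (ρ p.1).restrict (A p.2)
  have sum_ρ : ∀ i, ∑' j, ρ i (A j) = ν (A i) := fun i => by
    rw [← measure_iUnion hd hA, hcover, hρν]
  have sum_νp : Measure.sum νp = ν := by
    rw [← Measure.sum_sum fun i j => νp (i, j)]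
    simp only [νp, sum_smul_cond_eq_restrict (sum_ρ _)]
    rw [← Measure.restrict_iUnion hd hA, hcover, Measure.restrict_univ]
  have sum_ηp : Measure.sum ηp = η := by
    rw [← Measure.sum_sum fun i j => ηp (i, j)]
    simp only [ηp, ← Measure.restrict_iUnion hd hA, hcover, Measure.restrict_univ, hρη]
  have univ_eq : ∀ p, νp p univ = ηp p univ := fun p => by
    simp only [νp, ηp, Measure.smul_apply, smul_eq_mul, Measure.restrict_apply_univ]
    by_cases h0 : ν (A p.1) = 0
    · have : ρ p.1 (A p.2) = 0 := measure_mono_null (subset_univ _) ((hρν p.1).trans h0)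
      rw [this, zero_mul]
    · have := cond_isProbabilityMeasure h0
      rw [measure_univ, mul_one]
  have hτ : 0 ≤ τ := Metric.diam_nonneg.trans (hdiam 0)
  have H := GammaDecomp.of_countable (μ := μ) (ε := τ + r + τ) (S := 0) (νi := νp) (ηi := ηp)
    (by positivity) (fun p => mem_MM_of_le hν (sum_νp ▸ Measure.le_sum νp p))
    (fun p => mem_MM_of_le hη (sum_ηp ▸ Measure.le_sum ηp p)) ?_ fun p => ?_
  · rwa [sum_νp, sum_ηp] at H
  · simp only [mass, univ_eq, sub_self, abs_zero, hasSum_zero]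
  · refine (diam_msupp_cond_union_restrict_le (hbdd p.1) (hbdd p.2) hr (hρ p.1)).trans ?_
    gcongr
    exacts [hdiam _, hdiam _]

end PartitionDecomposition

section Subcurve

theorem GammaDecomp.of_tendsto [OpensMeasurableSpace X] [SecondCountableTopology X] {ι : Type*}
    {U : Ultrafilter ι} {m : Measure X} [IsFiniteMeasure m] {σ : ι → Measure X}
    {L : ι → Kernel X X} {R : ι → ℝ} {δ : ι → ℝ≥0∞} {μ ν η : Measure X}
    (hν : ν ∈ MM μ) (hη : η ∈ MM μ) (hνm : ν ≤ m)
    (hL : ∀ n, IsTransport (R n) (δ n) (σ n) (L n)) {r ε : ℝ} (hr : 0 ≤ r) (hrε : r < ε)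
    (hR : ∀ᶠ n in U, R n < r) (hδ : Tendsto δ U (𝓝 0)) (hσ : ∀ n, σ n ≤ m)
    (hLσ : ∀ n, L n ∘ₘ σ n ≤ m)
    (hσν : ∀ B, MeasurableSet B → Tendsto (fun n => σ n B) U (𝓝 (ν B)))
    (hLση : ∀ B, MeasurableSet B → Tendsto (fun n => (L n ∘ₘ σ n) B) U (𝓝 (η B))) :
    GammaDecomp μ ε 0 ν η := by
  have := isFiniteMeasure_of_le m hνm
  obtain ⟨A, hA, hbdd, hdiam, hcover, hd⟩ :=
    SeparableSpace.exists_measurable_partition_diam_le X (half_pos (sub_pos.2 hrε))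
  obtain ⟨ρ, hρη, hρν, hρ⟩ :=
    exists_sum_eq_of_partition hL hR hδ hσ hLσ hσν hLση hA hd hcover
  refine (GammaDecomp.of_partition hν hη hA hd hcover hbdd hdiam hρη hρν hr hρ).mono ?_ le_rfl
  linarith

variable [OpensMeasurableSpace X] [SecondCountableTopology X] {h : ℝ → ℝ} {μ : Measure X}
  [IsFiniteMeasureOnCompacts μ] {b : ℝ} {γ : ℝ → Measure X}

theorem IsCurveM.exists_subcurve (hh : IsGauge h) (hγ : IsCurveM h μ b γ) (hb : 0 < b)
    {K : Set X} (hK : IsCompact K) (hγK : ∀ t ∈ Icc 0 b, γ t ≤ μ.restrict K) {θ : Measure X}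
    (hθ : θ ≤ γ 0) :
    ∃ γ' : ℝ → Measure X, IsCurveM h μ b γ' ∧ γ' 0 = θ ∧ γ' b ≤ γ b ∧
      ∀ t, γ' t ≤ μ.restrict K := by
  have : IsFiniteMeasure (μ.restrict K) := isFiniteMeasure_restrict.2 hK.measure_lt_top.ne
  let U : Ultrafilter ℕ := Filter.hyperfilter ℕ
  have hε : Tendsto (fun n : ℕ => 1 / ((n : ℝ) + 1)) U (𝓝 0) :=
    tendsto_one_div_add_atTop_nhds_zero_nat.mono_left Nat.hyperfilter_le_atTop
  choose σ hσ0 hσb hσγ hσ using fun n : ℕ =>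
    hγ.exists_approx_subcurve hh hb hθ (ε := 1 / (n + 1)) (by positivity)
  have σ_le : ∀ t n, σ n t ≤ μ.restrict K := fun t n =>
    let ⟨u, hu, hle⟩ := hσγ n t
    hle.trans (hγK u hu)
  choose γ' hγ'K hγ' using fun t => exists_measure_tendsto_of_le U (σ_le t)
  have hγ'_mem : ∀ t, γ' t ∈ MM μ := fun t => mem_MM_of_le_restrict hK (hγ'K t)
  refine ⟨γ', ⟨hb.le, fun t _ => hγ'_mem t, fun s hs t ht => ?_⟩, ?_, ?_, hγ'K⟩
  · wlog hst : s ≤ t generalizing s t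
    · rw [dM_comm, abs_sub_comm]
      exact this t ht s hs (le_of_not_ge hst)
    rw [abs_sub_comm, abs_of_nonneg (sub_nonneg.2 hst)]
    refine le_of_forall_gt_imp_ge_of_dense fun ε hε' => ?_
    obtain ⟨r, hr, hrε⟩ := exists_between hε'
    have hr0 : 0 ≤ r := (sub_nonneg.2 hst).trans hr.le
    choose L hL hLσ using fun n => hσ n s hs t ht hst
    have radius_lt : ∀ᶠ n : ℕ in U, t - s + 1 / ((n : ℝ) + 1) < r := by
      have radius_tendsto := hε.const_add (t - s)
      rw [add_zero] at radius_tendsto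
      exact radius_tendsto.eventually_lt_const hr
    have loss_tendsto : Tendsto (fun n : ℕ => ENNReal.ofReal (1 / ((n : ℝ) + 1))) U (𝓝 0) := by
      simpa using ENNReal.tendsto_ofReal hε
    have H : GammaDecomp μ ε 0 (γ' s) (γ' t) :=
      .of_tendsto (hγ'_mem s) (hγ'_mem t) (hγ'K s) hL hr0 hrε radius_lt loss_tendsto (σ_le s)
        (fun n => (hLσ n).trans_le (σ_le t n)) (hγ' s) (by simpa only [hLσ] using hγ' t)
    exact dM_le (hr0.trans_lt hrε) (H.mono le_rfl (hh.nonneg (hr0.trans hrε.le)))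
  · refine Measure.ext fun B hB => tendsto_nhds_unique (hγ' 0 B hB) ?_
    simpa only [hσ0] using tendsto_const_nhds
  · exact Measure.le_iff.2 fun B hB => le_of_tendsto' (hγ' b B hB) fun n => hσb n B

end Subcurve

section TransportIntegral

variable {r : ℝ} {ν η : Measure X}

theorem TransportsWithin.exists_eq_add [IsFiniteMeasure ν] (H : TransportsWithin r ν η)
    (huniv : η univ = ν univ) {δ : ℝ≥0∞} (hδ : 0 < δ) :
    ∃ (κ : Kernel X X) (ρ : Measure X),
      IsTransport r δ ν κ ∧ η = κ ∘ₘ ν + ρ ∧ ρ univ ≤ δ := by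
  obtain ⟨κ, hκ, hle⟩ := H δ hδ
  have : IsFiniteMeasure (κ ∘ₘ ν) :=
    ⟨(comp_univ_le hκ.univ_le_one ν).trans_lt (measure_lt_top _ _)⟩
  refine ⟨κ, η - κ ∘ₘ ν, hκ, (add_comm _ _).trans (Measure.sub_add_cancel_of_le hle) |>.symm, ?_⟩
  rw [Measure.sub_apply .univ hle, tsub_le_iff_left, huniv]
  exact hκ.univ_le_comp_add

theorem IsTransport.lintegral_comp_le {δ : ℝ≥0∞} {κ : Kernel X X} (H : IsTransport r δ ν κ)
    {ψ : X → ℝ≥0∞} (hψ : Measurable ψ) {ω : ℝ≥0∞}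
    (hω : ∀ x y, dist x y ≤ r → ψ y ≤ ψ x + ω) :
    ∫⁻ y, ψ y ∂(κ ∘ₘ ν) ≤ ∫⁻ x, ψ x ∂ν + ω * ν univ := by
  have lintegral_kernel_le : ∀ x, ∫⁻ y, ψ y ∂κ x ≤ ψ x + ω := fun x => calc
    ∫⁻ y, ψ y ∂κ x ≤ ∫⁻ _, (ψ x + ω) ∂κ x := by
      refine lintegral_mono_ae ?_
      filter_upwards [H.ae_dist_le x] with y hy using hω x y (dist_comm x y ▸ hy)
    _ = (ψ x + ω) * κ x univ := lintegral_const _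
    _ ≤ ψ x + ω := mul_le_of_le_one_right' (H.univ_le_one x)
  calc ∫⁻ y, ψ y ∂(κ ∘ₘ ν) = ∫⁻ x, ∫⁻ y, ψ y ∂κ x ∂ν :=
        Measure.lintegral_bind κ.aemeasurable hψ.aemeasurable
    _ ≤ ∫⁻ x, (ψ x + ω) ∂ν := lintegral_mono lintegral_kernel_le
    _ = ∫⁻ x, ψ x ∂ν + ω * ν univ := by rw [lintegral_add_left hψ, lintegral_const]

theorem TransportsWithin.lintegral_le [IsFiniteMeasure ν] (H : TransportsWithin r ν η)
    (huniv : η univ = ν univ) {ψ : X → ℝ≥0∞} (hψ : Measurable ψ) {C ω : ℝ≥0∞} (hC : C ≠ ∞)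
    (hψC : ∀ x, ψ x ≤ C) (hω : ∀ x y, dist x y ≤ r → ψ y ≤ ψ x + ω) :
    ∫⁻ x, ψ x ∂η ≤ ∫⁻ x, ψ x ∂ν + ω * ν univ := by
  have bound : ∀ δ : ℝ≥0∞, 0 < δ →
      ∫⁻ x, ψ x ∂η ≤ ∫⁻ x, ψ x ∂ν + ω * ν univ + C * δ := fun δ hδ => by
    obtain ⟨κ, ρ, hκ, rfl, hρ⟩ := H.exists_eq_add huniv hδ
    rw [lintegral_add_measure]
    refine add_le_add (hκ.lintegral_comp_le hψ hω) ?_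
    calc ∫⁻ x, ψ x ∂ρ ≤ ∫⁻ _, C ∂ρ := lintegral_mono hψC
      _ = C * ρ univ := lintegral_const C
      _ ≤ C * δ := by gcongr
  have hlim : Tendsto (fun δ => ∫⁻ x, ψ x ∂ν + ω * ν univ + C * δ) (𝓝[>] 0)
      (𝓝 (∫⁻ x, ψ x ∂ν + ω * ν univ)) := by
    have := (ENNReal.Tendsto.const_mul (tendsto_id (α := ℝ≥0∞) (x := 𝓝 0)) (.inr hC)).const_add
      (∫⁻ x, ψ x ∂ν + ω * ν univ)
    rw [mul_zero, add_zero] at this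
    exact this.mono_left nhdsWithin_le_nhds
  exact ge_of_tendsto hlim (eventually_nhdsWithin_of_forall bound)

variable [IsFiniteMeasure ν] [IsFiniteMeasure η]

theorem TransportsWithin.integral_le_of_nonneg (H : TransportsWithin r ν η)
    (huniv : η univ = ν univ) {φ : X → ℝ} (hφ : Measurable φ) {C ω : ℝ} (hω0 : 0 ≤ ω)
    (h0 : ∀ x, 0 ≤ φ x) (hφC : ∀ x, φ x ≤ C) (hω : ∀ x y, dist x y ≤ r → φ y ≤ φ x + ω) :
    ∫ x, φ x ∂η ≤ ∫ x, φ x ∂ν + ω * mass ν := by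
  have ofReal_integral : ∀ θ : Measure X, IsFiniteMeasure θ →
      ∫⁻ x, ENNReal.ofReal (φ x) ∂θ = ENNReal.ofReal (∫ x, φ x ∂θ) := fun θ _ =>
    (ofReal_integral_eq_lintegral_ofReal (.of_bound hφ.aestronglyMeasurable C
      (.of_forall fun x => (Real.norm_of_nonneg (h0 x)).trans_le (hφC x))) (.of_forall h0)).symm
  have h_lintegral := H.lintegral_le huniv hφ.ennreal_ofReal ENNReal.ofReal_ne_top
    (fun x => ENNReal.ofReal_le_ofReal (hφC x)) (ω := ENNReal.ofReal ω) fun x y hxy => by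
      rw [← ENNReal.ofReal_add (h0 x) hω0]
      exact ENNReal.ofReal_le_ofReal (hω x y hxy)
  have integral_nonneg' : 0 ≤ ∫ x, φ x ∂ν := integral_nonneg h0
  have mass_nonneg' : 0 ≤ ω * (ν univ).toReal := mul_nonneg hω0 ENNReal.toReal_nonneg
  rw [ofReal_integral η ‹_›, ofReal_integral ν ‹_›, ← ENNReal.ofReal_toReal (measure_ne_top ν univ),
    ← ENNReal.ofReal_mul hω0, ← ENNReal.ofReal_add integral_nonneg' mass_nonneg'] at h_lintegral
  exact (ENNReal.ofReal_le_ofReal_iff (add_nonneg integral_nonneg' mass_nonneg')).1 h_lintegral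

theorem TransportsWithin.abs_integral_sub_le (H : TransportsWithin r ν η)
    (huniv : η univ = ν univ) {φ : X → ℝ} (hφ : Measurable φ) {C ω : ℝ} (hω0 : 0 ≤ ω)
    (hφC : ∀ x, |φ x| ≤ C) (hω : ∀ x y, dist x y ≤ r → |φ y - φ x| ≤ ω) :
    |∫ x, φ x ∂η - ∫ x, φ x ∂ν| ≤ ω * mass ν := by
  have hφ_int : ∀ θ : Measure X, IsFiniteMeasure θ → Integrable φ θ := fun θ _ =>
    .of_bound hφ.aestronglyMeasurable C (.of_forall hφC)
  have hφ_le : ∀ x, φ x ≤ C := fun x => (abs_le.1 (hφC x)).2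
  have le_hφ : ∀ x, -C ≤ φ x := fun x => (abs_le.1 (hφC x)).1
  have huniv_real : η.real univ = ν.real univ := congrArg ENNReal.toReal huniv
  have upper := H.integral_le_of_nonneg huniv (hφ.add_const C) (C := C + C) hω0
    (fun x => by linarith [le_hφ x]) (fun x => by linarith [hφ_le x])
    fun x y hxy => by linarith [(abs_le.1 (hω x y hxy)).2]
  have lower := H.integral_le_of_nonneg huniv (hφ.const_sub C) (C := C + C) hω0
    (fun x => by linarith [hφ_le x]) (fun x => by linarith [le_hφ x])
    fun x y hxy => by linarith [(abs_le.1 (hω x y hxy)).1]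
  rw [integral_add (hφ_int η ‹_›) (integrable_const _),
    integral_add (hφ_int ν ‹_›) (integrable_const _)] at upper
  rw [integral_sub (integrable_const _) (hφ_int η ‹_›),
    integral_sub (integrable_const _) (hφ_int ν ‹_›)] at lower
  simp only [integral_const, smul_eq_mul, huniv_real] at upper lower
  rw [abs_le]
  constructor <;> linarith

end TransportIntegral

section UniformModulus

theorem abs_integral_sub_integral_le_of_le {α : Type*} [MeasurableSpace α] {m ν : Measure α}
    {w φ : α → ℝ} (hw : Integrable w m) (hφ : Integrable φ m) (hν : ν ≤ m) :
    |∫ x, w x ∂ν - ∫ x, φ x ∂ν| ≤ ∫ x, ‖w x - φ x‖ ∂m := by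
  rw [← integral_sub (hw.mono_measure hν) (hφ.mono_measure hν)]
  exact (norm_integral_le_integral_norm _).trans
    (integral_mono_measure hν (.of_forall fun x => norm_nonneg _) (hw.sub hφ).norm)

theorem exists_forall_transportsWithin_abs_integral_sub_le [BorelSpace X] [LocallyCompactSpace X]
    [SecondCountableTopology X] {m : Measure X} [IsFiniteMeasure m] {w : X → ℝ}
    (hw : Integrable w m) {ε : ℝ} (hε : 0 < ε) :
    ∃ s₀ > 0, ∀ ν ≤ m, ∀ η ≤ m, η univ = ν univ → ∀ r < s₀, TransportsWithin r ν η →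
      |∫ x, w x ∂η - ∫ x, w x ∂ν| ≤ ε := by
  obtain ⟨φ, hφ_supp, hwφ, hφ, hφ_int⟩ :=
    hw.exists_hasCompactSupport_integral_sub_le (ε := ε / 3) (by positivity)
  obtain ⟨C, hC⟩ := hφ_supp.exists_bound_of_continuous hφ
  have mass_add_one_pos : 0 < mass m + 1 := by linarith [mass_nonneg m]
  obtain ⟨s₀, hs₀, hφ_unif⟩ := Metric.uniformContinuous_iff.1
    (hφ_supp.uniformContinuous_of_continuous hφ) (ε / 3 / (mass m + 1)) (by positivity)
  refine ⟨s₀, hs₀, fun ν hν η hη huniv r hr H => ?_⟩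
  have := isFiniteMeasure_of_le m hν
  have := isFiniteMeasure_of_le m hη
  have approx_ν := (abs_integral_sub_integral_le_of_le hw hφ_int hν).trans hwφ
  have approx_η := (abs_integral_sub_integral_le_of_le hw hφ_int hη).trans hwφ
  have integral_φ := H.abs_integral_sub_le huniv hφ.measurable
    (ω := ε / 3 / (mass m + 1)) (by positivity) hC fun x y hxy => by
      rw [← Real.dist_eq, dist_comm]
      exact (hφ_unif (hxy.trans_lt hr)).le
  have mass_le : mass ν ≤ mass m := ENNReal.toReal_mono (measure_ne_top m _) (hν univ)
  have hω : ε / 3 / (mass m + 1) * mass ν ≤ ε / 3 := by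
    calc ε / 3 / (mass m + 1) * mass ν ≤ ε / 3 / (mass m + 1) * (mass m + 1) := by
          gcongr
          linarith
      _ = ε / 3 := div_mul_cancel₀ _ mass_add_one_pos.ne'
  rw [abs_le] at approx_ν approx_η integral_φ ⊢
  constructor <;> linarith [approx_ν.1, approx_ν.2, approx_η.1, approx_η.2]

end UniformModulus

section CurveIntegral

variable {h : ℝ → ℝ} {μ : Measure X} {b : ℝ} {γ : ℝ → Measure X} [OpensMeasurableSpace X]
  [SecondCountableTopology X]

theorem IsTransport.comp_compl_cthickening_msupp {r : ℝ} {δ : ℝ≥0∞} {ν : Measure X}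
    {κ : Kernel X X} (H : IsTransport r δ ν κ) :
    (κ ∘ₘ ν) (Metric.cthickening r (msupp ν))ᶜ = 0 := by
  have hmeas := (Metric.isClosed_cthickening (δ := r) (E := msupp ν)).measurableSet.compl
  rw [Measure.bind_apply hmeas κ.aemeasurable, lintegral_eq_zero_iff (κ.measurable_coe hmeas)]
  have ae_mem_msupp : ∀ᵐ x ∂ν, x ∈ msupp ν := measure_msupp_compl ν
  filter_upwards [ae_mem_msupp] with x hx
  refine mem_ae_iff.1 ?_
  filter_upwards [H.ae_dist_le x] with y hy
  exact Metric.mem_cthickening_of_dist_le y x r _ hx hy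

theorem TransportsWithin.compl_cthickening_msupp {r : ℝ} {ν η : Measure X} [IsFiniteMeasure ν]
    (H : TransportsWithin r ν η) (huniv : η univ = ν univ) :
    η (Metric.cthickening r (msupp ν))ᶜ = 0 := by
  refine nonpos_iff_eq_zero.1 (ENNReal.le_of_forall_pos_le_add fun δ hδ _ => ?_)
  obtain ⟨κ, ρ, hκ, rfl, hρ⟩ := H.exists_eq_add huniv (ENNReal.coe_pos.2 hδ)
  rw [Measure.add_apply, hκ.comp_compl_cthickening_msupp]
  gcongr
  exact (measure_mono (subset_univ _)).trans hρ

variable [IsFiniteMeasureOnCompacts μ]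

theorem IsCurveM.univ_eq_of_mem (hh : IsGauge h) (hγ : IsCurveM h μ b γ) {t : ℝ}
    (ht : t ∈ Icc 0 b) : γ t univ = γ 0 univ := by
  simpa using (hγ.subcurve le_rfl ht.1 ht.2).univ_eq hh

theorem IsCurveM.mass_eq (hh : IsGauge h) (hγ : IsCurveM h μ b γ) {t : ℝ} (ht : t ∈ Icc 0 b) :
    mass (γ t) = mass (γ 0) :=
  congrArg ENNReal.toReal (hγ.univ_eq_of_mem hh ht)

theorem IsCurveM.le_restrict_cthickening_msupp (hh : IsGauge h) (hγ : IsCurveM h μ b γ) {r : ℝ}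
    (hr : b < r) {t : ℝ} (ht : t ∈ Icc 0 b) :
    γ t ≤ μ.restrict (Metric.cthickening r (msupp (γ 0))) := by
  have := isFiniteMeasure_of_mem_MM (hγ.2.1 0 hγ.zero_mem)
  exact le_restrict_of_compl_null (hγ.2.1 t ht).1 <|
    (hγ.transportsWithin hh le_rfl ht.1 ht.2 (by linarith [ht.2])).compl_cthickening_msupp
      (hγ.univ_eq_of_mem hh ht)

end CurveIntegral

section CurveModulus

variable [BorelSpace X] [LocallyCompactSpace X] [SecondCountableTopology X] {h : ℝ → ℝ}
  {μ m : Measure X} [IsFiniteMeasureOnCompacts μ] [IsFiniteMeasure m] {w : X → ℝ}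

theorem exists_forall_isCurveM_abs_integral_sub_le (hh : IsGauge h) (hw : Integrable w m) {ε : ℝ}
    (hε : 0 < ε) :
    ∃ s₀ > 0, ∀ b γ, IsCurveM h μ b γ → (∀ t ∈ Icc 0 b, γ t ≤ m) →
      ∀ s ∈ Icc 0 b, ∀ t ∈ Icc 0 b, |s - t| < s₀ → |∫ x, w x ∂γ s - ∫ x, w x ∂γ t| ≤ ε := by
  obtain ⟨s₀, hs₀, H⟩ := exists_forall_transportsWithin_abs_integral_sub_le hw hε
  refine ⟨s₀, hs₀, fun b γ hγ hγm s hs t ht hst => ?_⟩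
  wlog hle : t ≤ s generalizing s t
  · rw [abs_sub_comm] at hst ⊢
    exact this t ht s hs hst (le_of_not_ge hle)
  obtain ⟨r, hr, hrs₀⟩ := exists_between ((le_abs_self _).trans_lt hst)
  exact H (γ t) (hγm t ht) (γ s) (hγm s hs)
    ((hγ.univ_eq_of_mem hh hs).trans (hγ.univ_eq_of_mem hh ht).symm) r hrs₀
    (hγ.transportsWithin hh ht.1 hle hs.2 hr)

variable {b : ℝ} {γ : ℝ → Measure X}

theorem IsCurveM.continuousOn_integral (hh : IsGauge h) (hγ : IsCurveM h μ b γ)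
    (hγm : ∀ t ∈ Icc 0 b, γ t ≤ m) (hw : Integrable w m) :
    ContinuousOn (fun t => ∫ x, w x ∂γ t) (Icc 0 b) := by
  refine Metric.continuousOn_iff.2 fun t ht ε hε => ?_
  obtain ⟨s₀, hs₀, H⟩ :=
    exists_forall_isCurveM_abs_integral_sub_le (μ := μ) hh hw (half_pos hε)
  exact ⟨s₀, hs₀, fun s hs hst => (H b γ hγ hγm s hs t ht hst).trans_lt (half_lt_self hε)⟩

theorem IsCurveM.continuousOn_FfM (hh : IsGauge h) (hγ : IsCurveM h μ b γ)
    (hγm : ∀ t ∈ Icc 0 b, γ t ≤ m) (hw : Integrable w m) :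
    ContinuousOn (fun t => FfM w (γ t)) (Icc 0 b) :=
  ((hγ.continuousOn_integral hh hγm hw).div_const (mass (γ 0))).congr fun t ht => by
    rw [FfM, hγ.mass_eq hh ht]

end CurveModulus

section PointwiseGradient

variable {h : ℝ → ℝ} {μ η : Measure X} {F F₁ F₂ : Measure X → ℝ}

theorem le_rGradE {ε b s : ℝ} {γ : ℝ → Measure X} (hγ : IsCurveX h μ b γ) (hs : 0 < s)
    (hsε : s < ε) (hsb : s < b) :
    ENNReal.ofReal (|F (γ s) - F (γ 0)| / s) ≤ rGradE h μ F ε (γ 0) :=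
  le_sSup ⟨b, γ, s, hγ, rfl, hs, hsε, hsb, rfl⟩

theorem rGrad_le {ε : ℝ} (hε : 0 < ε) {a : ℝ≥0∞} (H : ∀ b γ s, IsCurveX h μ b γ → γ 0 = η →
    0 < s → s < ε → s < b → ENNReal.ofReal (|F (γ s) - F η| / s) ≤ a) : rGrad h μ F η ≤ a := by
  refine (iInf₂_le ε hε).trans (sSup_le ?_)
  rintro _ ⟨b, γ, s, hγ, h0, hs, hsε, hsb, rfl⟩
  exact H b γ s hγ h0 hs hsε hsb

theorem rGrad_neg : rGrad h μ (-F) η = rGrad h μ F η := by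
  simp only [rGrad, rGradE, Pi.neg_apply, neg_sub_neg, abs_sub_comm]

theorem rGrad_le_add {c : ℝ} (hF : ∀ ν ∈ MM μ, ν ≠ 0 → F ν + c = F₁ ν + F₂ ν) :
    rGrad h μ F η ≤ rGrad h μ F₁ η + rGrad h μ F₂ η := by
  refine ENNReal.le_iInf₂_add_iInf₂ fun ε₁ hε₁ ε₂ hε₂ =>
    rGrad_le (lt_min hε₁ hε₂) fun b γ s hγ h0 hs hsε hsb => ?_
  subst h0
  have hF0 := hF _ (hγ.1.2.1 0 hγ.1.zero_mem) (hγ.2 0 hγ.1.zero_mem)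
  have hFs := hF _ (hγ.1.2.1 s ⟨hs.le, hsb.le⟩) (hγ.2 s ⟨hs.le, hsb.le⟩)
  have sub_eq : F (γ s) - F (γ 0) = (F₁ (γ s) - F₁ (γ 0)) + (F₂ (γ s) - F₂ (γ 0)) := by linarith
  calc ENNReal.ofReal (|F (γ s) - F (γ 0)| / s)
      ≤ ENNReal.ofReal (|F₁ (γ s) - F₁ (γ 0)| / s + |F₂ (γ s) - F₂ (γ 0)| / s) := by
        rw [← add_div, sub_eq]
        gcongr
        exact abs_add_le _ _
    _ = ENNReal.ofReal (|F₁ (γ s) - F₁ (γ 0)| / s) + ENNReal.ofReal (|F₂ (γ s) - F₂ (γ 0)| / s) :=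
        ENNReal.ofReal_add (by positivity) (by positivity)
    _ ≤ rGradE h μ F₁ ε₁ (γ 0) + rGradE h μ F₂ ε₂ (γ 0) :=
        add_le_add (le_rGradE hγ hs (lt_min_iff.1 hsε).1 hsb)
          (le_rGradE hγ hs (lt_min_iff.1 hsε).2 hsb)

end PointwiseGradient

section MeanValue

theorem norm_sub_le_of_forall_frequently_slope_lt {E : Type*} [SeminormedAddCommGroup E]
    {u : ℝ → E} {a b M : ℝ} (hab : a ≤ b) (hu : ContinuousOn u (Icc a b))
    (H : ∀ x ∈ Ico a b, ∀ r, M < r → ∃ᶠ z in 𝓝[>] x, ‖u z - u x‖ / (z - x) < r) :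
    ‖u b - u a‖ ≤ M * (b - a) := by
  refine image_le_of_liminf_slope_right_le_deriv_boundary (f := fun x => ‖u x - u a‖)
    (B := fun x => M * (x - a)) (B' := fun _ => M) (hu.sub continuousOn_const).norm (by simp)
    (by fun_prop) (fun x _ => ?_) (fun x hx r hr => ?_) (right_mem_Icc.2 hab)
  · simpa using (((hasDerivAt_id x).sub_const a).const_mul M).hasDerivWithinAt
  · refine ((H x hx r hr).and_eventually self_mem_nhdsWithin).mono fun z ⟨hz, hxz⟩ => ?_
    rw [slope_def_field]
    refine hz.trans_le' ?_
    have : 0 < z - x := sub_pos.2 hxz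
    gcongr
    simpa using norm_sub_norm_le (u z - u a) (u x - u a)

variable {h : ℝ → ℝ} {μ : Measure X} {F : Measure X → ℝ} {b : ℝ} {γ : ℝ → Measure X}

theorem IsCurveX.eventually_abs_sub_div_lt (hγ : IsCurveX h μ b γ) {x : ℝ} (hx : x ∈ Ico 0 b)
    {r : ℝ} (hr0 : 0 < r) (hr : rGrad h μ F (γ x) < ENNReal.ofReal r) :
    ∀ᶠ z in 𝓝[>] x, |F (γ z) - F (γ x)| / (z - x) < r := by
  simp only [rGrad, iInf_lt_iff] at hr
  obtain ⟨ε, hε, hεr⟩ := hr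
  filter_upwards [Ioo_mem_nhdsGT (lt_min (lt_add_of_pos_right x hε) hx.2)] with z hz
  obtain ⟨hzε, hzb⟩ := lt_min_iff.1 hz.2
  have slope_le := le_rGradE (F := F) (hγ.subcurve hx.1 hx.2.le le_rfl) (sub_pos.2 hz.1)
    (sub_lt_iff_lt_add'.2 hzε) (sub_lt_sub_right hzb x)
  rw [add_sub_cancel, add_zero] at slope_le
  exact (ENNReal.ofReal_lt_ofReal_iff hr0).1 (slope_le.trans_lt hεr)

theorem IsCurveX.abs_sub_le (hγ : IsCurveX h μ b γ)
    (hF : ContinuousOn (fun t => F (γ t)) (Icc 0 b)) {M : ℝ} (hM0 : 0 ≤ M)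
    (hM : ∀ t ∈ Icc 0 b, rGrad h μ F (γ t) ≤ ENNReal.ofReal M) :
    |F (γ b) - F (γ 0)| ≤ M * b := by
  have := norm_sub_le_of_forall_frequently_slope_lt hγ.1.1 hF fun x hx r hr =>
    (hγ.eventually_abs_sub_div_lt hx (hM0.trans_lt hr) <|
      (hM x (Ico_subset_Icc_self hx)).trans_lt <|
        (ENNReal.ofReal_lt_ofReal_iff (hM0.trans_lt hr)).2 hr).frequently
  simpa using this

end MeanValue

section UpperGradient

variable {h : ℝ → ℝ} {μ : Measure X} {k g : X → ℝ}

/-- `g` is an upper gradient of `k`: the mean value functionals satisfy `r_{F_k} ≤ F_g` on `𝓧`. The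
representing function `g_k` of the theory is the one for which equality holds. -/
def IsUpperGradient (h : ℝ → ℝ) (μ : Measure X) (k g : X → ℝ) : Prop :=
  ∀ η ∈ MM μ, η ≠ 0 → rGrad h μ (FfM k) η ≤ ENNReal.ofReal (FfM g η)

theorem FfM_nonneg {α : Type*} [MeasurableSpace α] {f : α → ℝ} (hf : 0 ≤ f) (η : Measure α) :
    0 ≤ FfM f η :=
  div_nonneg (integral_nonneg hf) (mass_nonneg η)

theorem FfM_neg {α : Type*} [MeasurableSpace α] (f : α → ℝ) :
    FfM (-f) = -FfM f := by
  funext ν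
  simp only [FfM, Pi.neg_apply, integral_neg, neg_div]

theorem IsUpperGradient.neg (H : IsUpperGradient h μ k g) : IsUpperGradient h μ (-k) g :=
  fun η hη hη0 => by
    rw [FfM_neg, rGrad_neg]
    exact H η hη hη0

variable [BorelSpace X] [LocallyCompactSpace X] [SecondCountableTopology X] {m : Measure X}
  [IsFiniteMeasureOnCompacts μ] [IsFiniteMeasure m]

theorem IsUpperGradient.abs_integral_sub_le (hh : IsGauge h) (H : IsUpperGradient h μ k g)
    (hk : Integrable k m) {b : ℝ} {γ : ℝ → Measure X} (hγ : IsCurveM h μ b γ)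
    (hγm : ∀ t ∈ Icc 0 b, γ t ≤ m) {M : ℝ} (hM0 : 0 ≤ M)
    (hM : ∀ t ∈ Icc 0 b, ∫ x, g x ∂γ t ≤ M) :
    |∫ x, k x ∂γ b - ∫ x, k x ∂γ 0| ≤ M * b := by
  rcases eq_or_ne (γ 0) 0 with h0 | h0
  · have hb0 : γ b = 0 := by rw [← Measure.measure_univ_eq_zero, hγ.univ_eq hh, h0]; rfl
    rw [h0, hb0, sub_self, abs_zero]
    exact mul_nonneg hM0 hγ.1
  have := isFiniteMeasure_of_le m (hγm 0 hγ.zero_mem)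
  have hmass : 0 < mass (γ 0) := mass_pos h0
  have hγX : IsCurveX h μ b γ := ⟨hγ, fun t ht => by
    rwa [← Measure.measure_univ_ne_zero, hγ.univ_eq_of_mem hh ht, Measure.measure_univ_ne_zero]⟩
  have mean_value := hγX.abs_sub_le (hγ.continuousOn_FfM hh hγm hk)
    (div_nonneg hM0 hmass.le) fun t ht => (H _ (hγ.2.1 t ht) (hγX.2 t ht)).trans <| by
      rw [FfM, hγ.mass_eq hh ht]
      gcongr
      exact hM t ht
  rwa [FfM, FfM, hγ.mass_eq hh hγ.length_mem, ← sub_div, abs_div, abs_of_pos hmass,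
    div_mul_eq_mul_div, div_le_div_iff_of_pos_right hmass] at mean_value

theorem IsUpperGradient.exists_forall_abs_integral_sub_le (hh : IsGauge h)
    (H : IsUpperGradient h μ k g) (hg0 : 0 ≤ g) (hk : Integrable k m) (hg : Integrable g m)
    {ε : ℝ} (hε : 0 < ε) :
    ∃ s₀ > 0, ∀ b < s₀, ∀ γ, IsCurveM h μ b γ → (∀ t ∈ Icc 0 b, γ t ≤ m) →
      |∫ x, k x ∂γ b - ∫ x, k x ∂γ 0| ≤ (∫ x, g x ∂γ 0 + ε) * b := by
  obtain ⟨s₀, hs₀, modulus⟩ := exists_forall_isCurveM_abs_integral_sub_le (μ := μ) hh hg hε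
  refine ⟨s₀, hs₀, fun b hb γ hγ hγm => H.abs_integral_sub_le hh hk hγ hγm
    (add_nonneg (integral_nonneg hg0) hε.le) fun t ht => ?_⟩
  have := modulus b γ hγ hγm t ht 0 hγ.zero_mem <| by
    rw [sub_zero, abs_of_nonneg ht.1]
    exact ht.2.trans_lt hb
  linarith [(abs_le.1 this).2]

end UpperGradient

section Truncation

/- The function `min k c - c` is nonpositive, agrees with `k - c` on `{k < c}` and vanishes off it,
so its integral can only increase in passing from `η` to `θ`. -/
theorem integral_min_sub_le {α : Type*} [MeasurableSpace α] {ν η θ : Measure α}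
    [IsFiniteMeasure ν] [IsFiniteMeasure η] {k : α → ℝ} {c : ℝ} (hν : Integrable k ν)
    (hη : Integrable k η) (huniv : η univ = ν univ) (hθ : θ ≤ η)
    (hθ_univ : θ univ = ν.restrict {x | k x < c} univ) :
    ∫ x, min (k x) c ∂η - ∫ x, min (k x) c ∂ν ≤ ∫ x, k x ∂θ - ∫ x in {x | k x < c}, k x ∂ν := by
  have := isFiniteMeasure_of_le η hθ
  have hθ_int := hη.mono_measure hθ
  have min_int : ∀ {ρ : Measure α}, IsFiniteMeasure ρ → Integrable k ρ →
      Integrable (fun x => min (k x) c) ρ := fun _ hρ => hρ.inf (integrable_const c)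
  have huniv_real : η.real univ = ν.real univ := congrArg ENNReal.toReal huniv
  have hθ_real : θ.real univ = (ν.restrict {x | k x < c}).real univ :=
    congrArg ENNReal.toReal hθ_univ
  have integral_ν : ∫ x, (min (k x) c - c) ∂ν = ∫ x in {x | k x < c}, (k x - c) ∂ν := by
    rw [← integral_indicator₀ (nullMeasurableSet_lt hν.aemeasurable aemeasurable_const)]
    refine integral_congr_ae (.of_forall fun x => ?_)
    by_cases hx : k x < c
    · simp [hx, hx.le]
    · simp [hx, not_lt.1 hx]
  have integral_η : ∫ x, (min (k x) c - c) ∂η ≤ ∫ x, (k x - c) ∂θ := calc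
    ∫ x, (min (k x) c - c) ∂η ≤ ∫ x, (min (k x) c - c) ∂θ := by
      have := integral_mono_measure hθ (.of_forall fun x => sub_nonneg.2 (min_le_right (k x) c))
        ((integrable_const c).sub (min_int ‹_› hη))
      simpa only [← neg_sub c, integral_neg, neg_le_neg_iff] using this
    _ ≤ ∫ x, (k x - c) ∂θ :=
      integral_mono ((min_int ‹_› hθ_int).sub (integrable_const c))
        (hθ_int.sub (integrable_const c)) fun x => sub_le_sub_right (min_le_left _ _) c
  rw [integral_sub (min_int ‹_› hν) (integrable_const c),
    integral_sub hν.integrableOn (integrable_const c)] at integral_ν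
  rw [integral_sub (min_int ‹_› hη) (integrable_const c),
    integral_sub hθ_int (integrable_const c)] at integral_η
  simp only [integral_const, smul_eq_mul, huniv_real, hθ_real] at integral_ν integral_η
  linarith

end Truncation

section Locality

variable [BorelSpace X] [LocallyCompactSpace X] [SecondCountableTopology X] {h : ℝ → ℝ}
  {μ : Measure X} [IsFiniteMeasureOnCompacts μ] {k g : X → ℝ}

theorem integrable_indicator_lt {α : Type*} [MeasurableSpace α] {m : Measure α} {k g : α → ℝ}
    (hk : Integrable k m) (hg : Integrable g m) (c : ℝ) :
    Integrable (indicator {x | k x < c} g) m :=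
  hg.indicator₀ (nullMeasurableSet_lt hk.aemeasurable aemeasurable_const)

theorem IsUpperGradient.exists_forall_integral_min_sub_le (hh : IsGauge h)
    (H : IsUpperGradient h μ k g) (hg0 : 0 ≤ g) {K : Set X} (hK : IsCompact K)
    (hk : IntegrableOn k K μ) (hg : IntegrableOn g K μ) (c : ℝ) {ε : ℝ} (hε : 0 < ε) :
    ∃ s₀ > 0, ∀ b < s₀, 0 < b → ∀ γ, IsCurveM h μ b γ → (∀ t ∈ Icc 0 b, γ t ≤ μ.restrict K) →
      ∫ x, min (k x) c ∂γ b - ∫ x, min (k x) c ∂γ 0 ≤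
        (∫ x, indicator {x | k x < c} g x ∂γ 0 + ε) * b := by
  have := isFiniteMeasure_restrict.2 (hK.measure_lt_top (μ := μ)).ne
  obtain ⟨s₀, hs₀, growth⟩ := H.exists_forall_abs_integral_sub_le hh hg0 hk hg hε
  refine ⟨s₀, hs₀, fun b hbs₀ hb γ hγ hγK => ?_⟩
  have h0K := hγK 0 hγ.zero_mem
  have hbK := hγK b hγ.length_mem
  have := isFiniteMeasure_of_le _ h0K
  have := isFiniteMeasure_of_le _ hbK
  have hk0 : Integrable k (γ 0) := Integrable.mono_measure hk h0K
  have hkb : Integrable k (γ b) := Integrable.mono_measure hk hbK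
  obtain ⟨γ', hγ', h0, hle, hγ'K⟩ := hγ.exists_subcurve hh hb hK hγK
    (Measure.restrict_le_self (s := {x | k x < c}))
  calc ∫ x, min (k x) c ∂γ b - ∫ x, min (k x) c ∂γ 0
      ≤ ∫ x, k x ∂γ' b - ∫ x, k x ∂γ' 0 := by
        rw [h0]
        exact integral_min_sub_le hk0 hkb (hγ.univ_eq hh) hle ((hγ'.univ_eq hh).trans (by rw [h0]))
    _ ≤ (∫ x, g x ∂γ' 0 + ε) * b :=
      (le_abs_self _).trans (growth b hbs₀ γ' hγ' fun t _ => hγ'K t)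
    _ = (∫ x, indicator {x | k x < c} g x ∂γ 0 + ε) * b := by
      rw [h0, integral_indicator₀ (nullMeasurableSet_lt hk0.aemeasurable aemeasurable_const)]

theorem IsUpperGradient.exists_forall_abs_integral_min_sub_le (hh : IsGauge h)
    (H : IsUpperGradient h μ k g) (hg0 : 0 ≤ g) {K : Set X} (hK : IsCompact K)
    (hk : IntegrableOn k K μ) (hg : IntegrableOn g K μ) (c : ℝ) {ε : ℝ} (hε : 0 < ε) :
    ∃ s₀ > 0, ∀ b < s₀, 0 < b → ∀ γ, IsCurveM h μ b γ → (∀ t ∈ Icc 0 b, γ t ≤ μ.restrict K) →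
      |∫ x, min (k x) c ∂γ b - ∫ x, min (k x) c ∂γ 0| ≤
        (∫ x, indicator {x | k x < c} g x ∂γ 0 + ε) * b := by
  have := isFiniteMeasure_restrict.2 (hK.measure_lt_top (μ := μ)).ne
  obtain ⟨s₁, hs₁, growth⟩ :=
    H.exists_forall_integral_min_sub_le hh hg0 hK hk hg c (half_pos hε)
  obtain ⟨s₂, hs₂, modulus⟩ := exists_forall_isCurveM_abs_integral_sub_le (μ := μ) hh
    (integrable_indicator_lt hk hg c) (half_pos hε)
  refine ⟨min s₁ s₂, lt_min hs₁ hs₂, fun b hbs hb γ hγ hγK => ?_⟩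
  obtain ⟨hbs₁, hbs₂⟩ := lt_min_iff.1 hbs
  have forward := growth b hbs₁ hb γ hγ hγK
  have backward := growth b hbs₁ hb _ hγ.reverse fun t ht =>
    hγK _ ⟨by linarith [ht.2], by linarith [ht.1]⟩
  have end_le := modulus b γ hγ hγK b hγ.length_mem 0 hγ.zero_mem <| by
    rwa [sub_zero, abs_of_pos hb]
  simp only [sub_self, sub_zero] at backward
  rw [abs_sub_le_iff]
  exact ⟨forward.trans (mul_le_mul_of_nonneg_right (by linarith) hb.le),
    backward.trans (mul_le_mul_of_nonneg_right (by linarith [(abs_le.1 end_le).2]) hb.le)⟩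

theorem IsUpperGradient.min (hh : IsGauge h) (H : IsUpperGradient h μ k g) (hg0 : 0 ≤ g)
    (hk : LocallyIntegrable k μ) (hg : LocallyIntegrable g μ) (c : ℝ) :
    IsUpperGradient h μ (fun x => min (k x) c) (indicator {x | k x < c} g) := by
  intro η hη hη0
  have := isFiniteMeasure_of_mem_MM hη
  have hmass : 0 < mass η := mass_pos hη0
  refine ENNReal.le_of_forall_pos_le_add fun ε hε _ => ?_
  have hε0 : (0 : ℝ) < ε := hε
  obtain ⟨ρ, hρ, hK⟩ := hη.2.exists_isCompact_cthickening
  obtain ⟨s₀, hs₀, growth⟩ := H.exists_forall_abs_integral_min_sub_le hh hg0 hK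
    (hk.integrableOn_isCompact hK) (hg.integrableOn_isCompact hK) c (mul_pos hε0 hmass)
  refine rGrad_le (lt_min hρ hs₀) fun b γ s hγ h0 hs hslt hsb => ?_
  obtain ⟨hsρ, hss₀⟩ := lt_min_iff.1 hslt
  subst h0
  have hγs : IsCurveM h μ s γ := by simpa using hγ.1.subcurve le_rfl hs.le hsb.le
  have integral_le := growth s hss₀ hs γ hγs fun t ht =>
    hγs.le_restrict_cthickening_msupp hh hsρ ht
  rw [← ENNReal.ofReal_coe_nnreal,
    ← ENNReal.ofReal_add (FfM_nonneg (indicator_nonneg fun x _ => hg0 x) _) hε0.le]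
  refine ENNReal.ofReal_le_ofReal ((div_le_iff₀ hs).2 ?_)
  rw [FfM, FfM, FfM, hγs.mass_eq hh hγs.length_mem, ← sub_div, abs_div, abs_of_pos hmass,
    div_add' _ _ _ hmass.ne', div_mul_eq_mul_div]
  gcongr

theorem IsUpperGradient.max (hh : IsGauge h) (H : IsUpperGradient h μ k g) (hg0 : 0 ≤ g)
    (hk : LocallyIntegrable k μ) (hg : LocallyIntegrable g μ) (c : ℝ) :
    IsUpperGradient h μ (fun x => max (k x) c) (indicator {x | c < k x} g) := by
  have min_neg := (H.neg.min hh hg0 hk.neg hg (-c)).neg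
  simpa only [Pi.neg_def, Pi.neg_apply, min_neg_neg, neg_neg, neg_lt_neg_iff] using min_neg

end Locality

section Splitting

variable {α : Type*} [MeasurableSpace α] {k g : α → ℝ} {ν : Measure α}

theorem FfM_add_const_eq_min_add_max [IsFiniteMeasure ν] (hk : Integrable k ν) (hν : ν ≠ 0)
    (c : ℝ) :
    FfM k ν + c = FfM (fun x => min (k x) c) ν + FfM (fun x => max (k x) c) ν := by
  have hmass := (mass_pos hν).ne'
  have integral_eq : ∫ x, min (k x) c ∂ν + ∫ x, max (k x) c ∂ν = ∫ x, k x ∂ν + mass ν * c := by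
    have min_int : Integrable (fun x => min (k x) c) ν := hk.inf (integrable_const c)
    have max_int : Integrable (fun x => max (k x) c) ν := hk.sup (integrable_const c)
    rw [← integral_add min_int max_int]
    simp only [min_add_max]
    rw [integral_add hk (integrable_const c), integral_const]
    rfl
  rw [FfM, FfM, FfM, ← add_div, integral_eq]
  field_simp

theorem FfM_indicator_lt_add_indicator_gt_le (hg0 : 0 ≤ g) (hk : Integrable k ν)
    (hg : Integrable g ν) (c : ℝ) :
    FfM (indicator {x | k x < c} g) ν + FfM (indicator {x | c < k x} g) ν ≤ FfM g ν := by
  have lt_int := integrable_indicator_lt hk hg c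
  have gt_int : Integrable (indicator {x | c < k x} g) ν := by
    simpa only [Pi.neg_apply, neg_lt_neg_iff] using integrable_indicator_lt hk.neg hg (-c)
  rw [FfM, FfM, FfM, ← add_div, ← integral_add lt_int gt_int]
  refine div_le_div_of_nonneg_right (integral_mono (lt_int.add gt_int) hg fun x => ?_)
    (mass_nonneg ν)
  have := hg0 x
  rcases lt_trichotomy (k x) c with hx | hx | hx
  · simp [hx, hx.not_gt]
  · simpa [hx] using this
  · simp [hx, hx.not_gt]

end Splitting

theorem eq_and_eq_of_add_le_add {a b a' b' : ℝ≥0∞} (ha : a ≤ a') (hb : b ≤ b') (ha' : a' ≠ ∞)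
    (hb' : b' ≠ ∞) (hle : a' + b' ≤ a + b) : a = a' ∧ b = b' :=
  ⟨ha.antisymm <| (ENNReal.add_le_add_iff_right hb').1 (hle.trans (add_le_add le_rfl hb)),
    hb.antisymm <| (ENNReal.add_le_add_iff_left ha').1 (hle.trans (add_le_add ha le_rfl))⟩

theorem integrable_of_mem_MM [SecondCountableTopology X] {μ ν : Measure X} {f : X → ℝ}
    (hf : LocallyIntegrable f μ) (hν : ν ∈ MM μ) : Integrable f ν :=
  Integrable.mono_measure (hf.integrableOn_isCompact hν.2)
    (le_restrict_of_compl_null hν.1 (measure_msupp_compl ν))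

theorem stmt18_general [BorelSpace X] [LocallyCompactSpace X] [SecondCountableTopology X]
    {μ : Measure X} [IsFiniteMeasureOnCompacts μ] {h : ℝ → ℝ} (hh : IsGauge h) {k g : X → ℝ}
    (hk : LocallyIntegrable k μ) (hg : LocallyIntegrable g μ) (hg0 : 0 ≤ g)
    (hgrad : ∀ η ∈ MM μ, η ≠ 0 → rGrad h μ (FfM k) η = ENNReal.ofReal (FfM g η)) (c : ℝ)
    {η : Measure X} (hη : η ∈ MM μ) (hη0 : η ≠ 0) :
    rGrad h μ (FfM fun x => min (k x) c) η = ENNReal.ofReal (FfM (indicator {x | k x < c} g) η) ∧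
    rGrad h μ (FfM fun x => max (k x) c) η =
      ENNReal.ofReal (FfM (indicator {x | c < k x} g) η) := by
  have H : IsUpperGradient h μ k g := fun ν hν hν0 => (hgrad ν hν hν0).le
  refine eq_and_eq_of_add_le_add (H.min hh hg0 hk hg c η hη hη0) (H.max hh hg0 hk hg c η hη hη0)
    ENNReal.ofReal_ne_top ENNReal.ofReal_ne_top ?_
  rw [← ENNReal.ofReal_add (FfM_nonneg (indicator_nonneg fun x _ => hg0 x) _)
    (FfM_nonneg (indicator_nonneg fun x _ => hg0 x) _)]
  calc _ ≤ ENNReal.ofReal (FfM g η) := ENNReal.ofReal_le_ofReal <|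
        FfM_indicator_lt_add_indicator_gt_le hg0 (integrable_of_mem_MM hk hη)
          (integrable_of_mem_MM hg hη) c
    _ = rGrad h μ (FfM k) η := (hgrad η hη hη0).symm
    _ ≤ rGrad h μ (FfM fun x => min (k x) c) η + rGrad h μ (FfM fun x => max (k x) c) η :=
      rGrad_le_add fun ν hν hν0 => by
        have := isFiniteMeasure_of_mem_MM hν
        exact FfM_add_const_eq_min_add_max (integrable_of_mem_MM hk hν) hν0 c

/-- Locality of upper gradients: if `g` represents the upper gradient
of `k` (i.e. `r_{F_k} = F_g` on `𝓧`), then `g·χ_{k<c}` represents the upper gradient of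
`k ∧ c` and `g·χ_{k>c}` represents the upper gradient of `k ∨ c`. -/
theorem stmt18 {X : Type*} [MetricSpace X] [MeasurableSpace X] [BorelSpace X]
    [LocallyCompactSpace X] [TopologicalSpace.SeparableSpace X]
    (μ : Measure X) [μ.Regular]
    (hμ : ∀ (x : X) (r : ℝ), 0 < r → 0 < μ (Metric.ball x r) ∧ μ (Metric.ball x r) < ⊤)
    (h : ℝ → ℝ) (hh : IsGauge h)
    (k g : X → ℝ) (hk : LocallyIntegrable k μ) (hg : LocallyIntegrable g μ)
    (hg0 : ∀ x, 0 ≤ g x)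
    (hgrad : ∀ η ∈ MM μ, η ≠ 0 → rGrad h μ (FfM k) η = ENNReal.ofReal (FfM g η))
    (c : ℝ) :
    (∀ η ∈ MM μ, η ≠ 0 →
      rGrad h μ (FfM (fun x => min (k x) c)) η =
        ENNReal.ofReal (FfM (Set.indicator {x | k x < c} g) η)) ∧
    (∀ η ∈ MM μ, η ≠ 0 →
      rGrad h μ (FfM (fun x => max (k x) c)) η =
        ENNReal.ofReal (FfM (Set.indicator {x | c < k x} g) η)) := by
  have := UniformSpace.secondCountable_of_separable X
  exact ⟨fun η hη hη0 => (stmt18_general hh hk hg hg0 hgrad c hη hη0).1,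
    fun η hη hη0 => (stmt18_general hh hk hg hg0 hgrad c hη hη0).2⟩
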